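/- (Lemma "flatgraphlem", graphical case: a graph starting in a very thin slab with bounded gradient becomes very flat after a short time.) Let n ≥ 1. For every L₀ ≥ 1 there exist Λ₁ > 1 and γ₁ ∈ (0,1) such that the following holds. Let γ ∈ (0,γ₁], ρ₀ > 0, t₁ ∈ ℝ, set s₁ := t₁ + γ⁴ρ₀², let t₂ > s₁, ẑ₀ ∈ ℝⁿ, and let f : [t₁,t₂) × Bⁿ(ẑ₀,4ρ₀) → ℝ be a graphical mean curvature flow with |f(t,x)| < 4ρ₀ for all (t,x). Suppose sup_{Bⁿ(ẑ₀,4ρ₀)} |Df(t₁,·)| ≤ L₀ and sup_{Bⁿ(ẑ₀,4ρ₀)} |f(t₁,·)| ≤ γ⁴ρ₀. Then for all x ∈ Bⁿ(ẑ₀,ρ₀): |f(s₁,x)| ≤ Λ₁γ⁴ρ₀, |Df(s₁,x)| ≤ Λ₁γ, and |D²f(s₁,x)| ≤ Λ₁γ⁻²ρ₀⁻¹, where |D²f| denotes the Frobenius norm of the spatial Hessian. -/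

import Mathlib

open Metric Set MeasureTheory

/-- Partial derivative `∂ᵢ g (x)`. -/
noncomputable def pd {n : ℕ} (g : EuclideanSpace ℝ (Fin n) → ℝ) (x : EuclideanSpace ℝ (Fin n))
    (i : Fin n) : ℝ :=
  fderiv ℝ g x (EuclideanSpace.single i 1)

/-- Second partial derivative `∂ᵢ∂ⱼ g (x)`. -/
noncomputable def pd2 {n : ℕ} (g : EuclideanSpace ℝ (Fin n) → ℝ) (x : EuclideanSpace ℝ (Fin n))
    (i j : Fin n) : ℝ :=
  fderiv ℝ (fun y => pd g y j) x (EuclideanSpace.single i 1)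

/-- Squared Euclidean norm `|Dg(x)|²` of the spatial gradient. -/
noncomputable def gradNormSq {n : ℕ} (g : EuclideanSpace ℝ (Fin n) → ℝ)
    (x : EuclideanSpace ℝ (Fin n)) : ℝ :=
  ∑ i, (pd g x i) ^ 2

/-- Euclidean norm `|Dg(x)|` of the spatial gradient. -/
noncomputable def gradNorm {n : ℕ} (g : EuclideanSpace ℝ (Fin n) → ℝ)
    (x : EuclideanSpace ℝ (Fin n)) : ℝ :=
  Real.sqrt (gradNormSq g x)

/-- Frobenius norm `|D²g(x)|` of the spatial Hessian. -/
noncomputable def hessNorm {n : ℕ} (g : EuclideanSpace ℝ (Fin n) → ℝ)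
    (x : EuclideanSpace ℝ (Fin n)) : ℝ :=
  Real.sqrt (∑ i, ∑ j, (pd2 g x i j) ^ 2)

/-- Right-hand side of the graphical mean curvature flow equation:
`∑ᵢⱼ (δᵢⱼ − ∂ᵢg ∂ⱼg / (1+|Dg|²)) ∂ᵢ∂ⱼ g`. -/
noncomputable def mcfRHS {n : ℕ} (g : EuclideanSpace ℝ (Fin n) → ℝ)
    (x : EuclideanSpace ℝ (Fin n)) : ℝ :=
  ∑ i, ∑ j,
    ((if i = j then (1 : ℝ) else 0) - pd g x i * pd g x j / (1 + gradNormSq g x)) * pd2 g x i j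

/-- `f` is a (smooth) graphical mean curvature flow on `I × U`. -/
def IsGMCF {n : ℕ} (I : Set ℝ) (U : Set (EuclideanSpace ℝ (Fin n)))
    (f : ℝ → EuclideanSpace ℝ (Fin n) → ℝ) : Prop :=
  ContDiffOn ℝ (⊤ : ℕ∞) (fun p : ℝ × EuclideanSpace ℝ (Fin n) => f p.1 p.2) (I ×ˢ U) ∧
  ∀ t ∈ I, ∀ x ∈ U, deriv (fun s => f s x) t = mcfRHS (f t) x

/-- Squared norm `|A|²(g,x)` of the second fundamental form of the graph of `g`
at `(x, g(x))`. -/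
noncomputable def secondFF2 {n : ℕ} (g : EuclideanSpace ℝ (Fin n) → ℝ)
    (x : EuclideanSpace ℝ (Fin n)) : ℝ :=
  ∑ i, ∑ j, ∑ k, ∑ l,
    ((if i = k then (1 : ℝ) else 0) - pd g x i * pd g x k / (1 + gradNormSq g x)) *
      ((if j = l then (1 : ℝ) else 0) - pd g x j * pd g x l / (1 + gradNormSq g x)) *
      (pd2 g x i j / Real.sqrt (1 + gradNormSq g x)) *
      (pd2 g x k l / Real.sqrt (1 + gradNormSq g x))

/-! Let `L = ∂ₜ - aᵢⱼ(Du) ∂ᵢ∂ⱼ` be the linearised operator along the flow `u`, and let `δ = γ⁴`, so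
that after parabolic scaling `ρ₀ = 1` and the time interval has length `δ`. The proof applies the
maximum principle for `L` to four functions in turn.
* The barriers `±K(δ + t + |x - x₀|² / 4n)` give `|u| = O(δ)` away from the lateral boundary.
* `1 + |Du|²`, times the cube of a cutoff function, gives an interior gradient bound.
* Once the gradient is bounded, `t |Du|² + V u²` gives `|Du|² ≲ sup u² / t`, which is `O(δ)` at time
  `δ`; hence `|Du|` is small.
* Once the gradient is small, `t² |D²u|² + N |Du|²` gives `|D²u|² ≲ 1 / t`, because the term
  quadratic in `|D²u|²` in the evolution of `|D²u|²` carries a small factor.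
-/

open scoped ContDiff Topology Matrix

section DirectionalDerivative

variable {E : Type*} [NormedAddCommGroup E] [NormedSpace ℝ E] {F G : E → ℝ} {p v w : E}

/-- The derivative of `F` in the fixed direction `v`, as a function of the base point so that it can
be iterated. Being a derivative along lines, it makes sense in the spatial directions also at the
initial time of a flow, where the time derivative does not. -/
noncomputable def dirDeriv (v : E) (F : E → ℝ) (p : E) : ℝ :=
  lineDeriv ℝ F p v

lemma dirDeriv_eq_fderiv (hF : DifferentiableAt ℝ F p) : dirDeriv v F p = fderiv ℝ F p v :=
  hF.lineDeriv_eq_fderiv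

lemma dirDeriv_eq_of_hasFDerivAt {L : E →L[ℝ] ℝ} (hF : HasFDerivAt F L p) : dirDeriv v F p = L v :=
  (hF.hasLineDerivAt v).lineDeriv

lemma dirDeriv_congr (h : F =ᶠ[𝓝 p] G) : dirDeriv v F p = dirDeriv v G p :=
  h.lineDeriv_eq

lemma dirDeriv_add (hF : DifferentiableAt ℝ F p) (hG : DifferentiableAt ℝ G p) :
    dirDeriv v (F + G) p = dirDeriv v F p + dirDeriv v G p := by
  simp [dirDeriv_eq_of_hasFDerivAt (hF.hasFDerivAt.add hG.hasFDerivAt), dirDeriv_eq_fderiv, hF, hG]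

lemma dirDeriv_const (c : ℝ) : dirDeriv v (fun _ ↦ c) p = 0 :=
  dirDeriv_eq_of_hasFDerivAt (hasFDerivAt_const c p)

lemma dirDeriv_const_smul (c : ℝ) (hF : DifferentiableAt ℝ F p) :
    dirDeriv v (c • F) p = c * dirDeriv v F p := by
  simp [dirDeriv_eq_of_hasFDerivAt (hF.hasFDerivAt.const_smul c), dirDeriv_eq_fderiv hF]

lemma dirDeriv_mul (hF : DifferentiableAt ℝ F p) (hG : DifferentiableAt ℝ G p) :
    dirDeriv v (F * G) p = F p * dirDeriv v G p + G p * dirDeriv v F p := by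
  simp [dirDeriv_eq_of_hasFDerivAt (hF.hasFDerivAt.mul hG.hasFDerivAt), dirDeriv_eq_fderiv, hF, hG]

lemma dirDeriv_sum {ι : Type*} {s : Finset ι} {F : ι → E → ℝ}
    (hF : ∀ i ∈ s, DifferentiableAt ℝ (F i) p) :
    dirDeriv v (∑ i ∈ s, F i) p = ∑ i ∈ s, dirDeriv v (F i) p := by
  have hsum : HasFDerivAt (∑ i ∈ s, F i) (∑ i ∈ s, fderiv ℝ (F i) p) p :=
    HasFDerivAt.sum fun i hi ↦ (hF i hi).hasFDerivAt
  rw [dirDeriv_eq_of_hasFDerivAt hsum, sum_apply]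
  exact Finset.sum_congr rfl fun i hi ↦ (dirDeriv_eq_fderiv (hF i hi)).symm

lemma dirDeriv_inv (hF : DifferentiableAt ℝ F p) (h₀ : F p ≠ 0) :
    dirDeriv v F⁻¹ p = -(F p)⁻¹ ^ 2 * dirDeriv v F p := by
  have hinv : HasFDerivAt F⁻¹ _ p := (hasDerivAt_inv h₀).comp_hasFDerivAt p hF.hasFDerivAt
  simp [dirDeriv_eq_of_hasFDerivAt hinv, dirDeriv_eq_fderiv hF]

lemma dirDeriv_sum_smul {ι : Type*} (s : Finset ι) (c : ι → ℝ) (v : ι → E)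
    (hF : DifferentiableAt ℝ F p) :
    dirDeriv (∑ i ∈ s, c i • v i) F p = ∑ i ∈ s, c i * dirDeriv (v i) F p := by
  simp [dirDeriv_eq_fderiv hF]

lemma contDiffAt_dirDeriv {m k : ℕ∞ω} (hF : ContDiffAt ℝ m F p) (hk : k + 1 ≤ m) :
    ContDiffAt ℝ k (dirDeriv v F) p := by
  have hev : ∀ᶠ q in 𝓝 p, dirDeriv v F q = fderiv ℝ F q v := by
    have h₁ : ContDiffAt ℝ 1 F p := hF.of_le (le_add_self.trans hk)
    filter_upwards [h₁.eventually (by simp)] with q hq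
    exact dirDeriv_eq_fderiv (hq.differentiableAt (by simp))
  exact ((hF.fderiv_right hk).clm_apply contDiffAt_const).congr_of_eventuallyEq hev

lemma dirDeriv_comm (hF : ContDiffAt ℝ 2 F p) :
    dirDeriv v (dirDeriv w F) p = dirDeriv w (dirDeriv v F) p := by
  have hd : DifferentiableAt ℝ (fderiv ℝ F) p :=
    (hF.fderiv_right (m := 1) (by norm_num [one_add_one_eq_two])).differentiableAt (by simp)
  have heval (a b : E) : dirDeriv a (dirDeriv b F) p = fderiv ℝ (fderiv ℝ F) p a b := by
    have hev : dirDeriv b F =ᶠ[𝓝 p] fun q ↦ fderiv ℝ F q b := by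
      filter_upwards [hF.eventually (by simp)] with q hq
      exact dirDeriv_eq_fderiv (hq.differentiableAt (by simp))
    rw [dirDeriv_congr hev,
      dirDeriv_eq_of_hasFDerivAt (hd.hasFDerivAt.clm_apply (hasFDerivAt_const b p))]
    simp
  rw [heval, heval]
  exact (hF.isSymmSndFDerivAt (by simp)).eq v w

end DirectionalDerivative

section PositiveSemidefinite

lemma bilinForm_two_mul_le {V : Type*} [AddCommGroup V] [Module ℝ V]
    {B : LinearMap.BilinForm ℝ V} (hB : B.IsPosSemidef) (x y : V) :
    2 * B x y ≤ B x x + B y y := by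
  have hnonneg := hB.isNonneg.nonneg (x - y)
  have hsymm : B y x = B x y := hB.isSymm.eq y x
  simp only [map_sub, LinearMap.sub_apply] at hnonneg
  linarith

lemma bilinForm_sum_smul_self_le {V ι : Type*} [AddCommGroup V] [Module ℝ V]
    {B : LinearMap.BilinForm ℝ V} (hB : B.IsPosSemidef) (s : Finset ι) (c : ι → ℝ) (x : ι → V) :
    B (∑ i ∈ s, c i • x i) (∑ i ∈ s, c i • x i) ≤ (∑ i ∈ s, c i ^ 2) * ∑ i ∈ s, B (x i) (x i) := by
  set y := ∑ i ∈ s, c i • x i with hy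
  have hyy : B y y = ∑ i ∈ s, c i * B (x i) y := by
    conv_lhs => enter [1]; rw [hy]
    simp [LinearMap.sum_apply]
  have hterm : ∀ i ∈ s, B (x i) y ^ 2 ≤ B (x i) (x i) * B y y := fun i _ ↦
    LinearMap.BilinForm.apply_sq_le_of_symm B hB.isNonneg.nonneg ⟨hB.isSymm.eq⟩ (x i) y
  have hsq : B y y ^ 2 ≤ ((∑ i ∈ s, c i ^ 2) * ∑ i ∈ s, B (x i) (x i)) * B y y := calc
    B y y ^ 2 ≤ (∑ i ∈ s, c i ^ 2) * ∑ i ∈ s, B (x i) y ^ 2 := by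
      rw [hyy]; exact Finset.sum_mul_sq_le_sq_mul_sq s c _
    _ ≤ (∑ i ∈ s, c i ^ 2) * ∑ i ∈ s, B (x i) (x i) * B y y := by gcongr with i hi; exact hterm i hi
    _ = _ := by rw [← Finset.sum_mul, mul_assoc]
  have hrhs : 0 ≤ (∑ i ∈ s, c i ^ 2) * ∑ i ∈ s, B (x i) (x i) :=
    mul_nonneg (Finset.sum_nonneg fun i _ ↦ sq_nonneg _)
      (Finset.sum_nonneg fun i _ ↦ hB.isNonneg.nonneg _)
  nlinarith [hB.isNonneg.nonneg y]

variable {ι : Type*} [Fintype ι] {A B : Matrix ι ι ℝ}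

lemma posSemidef_toBilin' [DecidableEq ι] (hA : A.PosSemidef) : A.toBilin'.IsPosSemidef where
  eq := (Matrix.isSymm_toBilin'_iff_isSymm.2 (by simpa using hA.isHermitian)).eq
  nonneg x := by simpa [Matrix.toBilin'_apply'] using hA.dotProduct_mulVec_nonneg x

open scoped MatrixOrder Matrix.Norms.L2Operator in
lemma posSemidef_trace_mul_nonneg (hA : A.PosSemidef) (hB : B.PosSemidef) :
    0 ≤ (A * B).trace := by
  classical
  obtain ⟨C, rfl⟩ := CStarAlgebra.nonneg_iff_eq_star_mul_self.mp hA.nonneg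
  rw [Matrix.mul_assoc, Matrix.trace_mul_comm]
  exact (hB.mul_mul_conjTranspose_same C).trace_nonneg

end PositiveSemidefinite

/-- Space-time `ℝ × ℝⁿ`, with points `(t, x)`. -/
abbrev Spacetime (n : ℕ) := ℝ × EuclideanSpace ℝ (Fin n)

section ParabolicOperator

variable {n : ℕ} {a : Matrix (Fin n) (Fin n) ℝ} {F G : Spacetime n → ℝ} {p v : Spacetime n}

/-- The time direction `∂ₜ` in space-time. -/
def timeDir : Spacetime n := (1, 0)

/-- The `i`-th spatial coordinate direction `∂ᵢ` in space-time. -/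
noncomputable def spaceDir (i : Fin n) : Spacetime n := (0, EuclideanSpace.single i 1)

/-- The spatial gradient `DF(p)` of a function on space-time, as a coordinate vector. -/
noncomputable def spatialGrad (F : Spacetime n → ℝ) (p : Spacetime n) : Fin n → ℝ :=
  fun i ↦ dirDeriv (spaceDir i) F p

/-- The spatial Hessian `D²F(p)` of a function on space-time; its `(i, j)` entry is `∂ⱼ∂ᵢF`. -/
noncomputable def spatialHess (F : Spacetime n → ℝ) (p : Spacetime n) : Matrix (Fin n) (Fin n) ℝ :=
  Matrix.of fun i j ↦ dirDeriv (spaceDir j) (dirDeriv (spaceDir i) F) p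

/-- The operator `∂ₜ - ∑ aᵢⱼ ∂ᵢ∂ⱼ` at `p`. The coefficient matrix is that of the single point
`p`, so a variable-coefficient operator is obtained by letting `a` depend on `p`. -/
noncomputable def parabolicOp (a : Matrix (Fin n) (Fin n) ℝ) (F : Spacetime n → ℝ)
    (p : Spacetime n) : ℝ :=
  dirDeriv timeDir F p - (a * spatialHess F p).trace

/-- The bilinear form `∑ aᵢⱼ ∂ᵢF ∂ⱼG` at `p`, which is the error term in the product rule for
`parabolicOp a`. -/
noncomputable def gradForm (a : Matrix (Fin n) (Fin n) ℝ) (F G : Spacetime n → ℝ)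
    (p : Spacetime n) : ℝ :=
  a.toBilin' (spatialGrad F p) (spatialGrad G p)

lemma eventually_differentiableAt (hF : ContDiffAt ℝ 2 F p) :
    ∀ᶠ q in 𝓝 p, DifferentiableAt ℝ F q := by
  filter_upwards [hF.eventually (by simp)] with q hq
  exact hq.differentiableAt (by simp)

lemma differentiableAt_dirDeriv (hF : ContDiffAt ℝ 2 F p) : DifferentiableAt ℝ (dirDeriv v F) p :=
  (contDiffAt_dirDeriv (k := 1) hF (by norm_num [one_add_one_eq_two])).differentiableAt (by simp)

lemma spatialGrad_add (hF : DifferentiableAt ℝ F p) (hG : DifferentiableAt ℝ G p) :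
    spatialGrad (F + G) p = spatialGrad F p + spatialGrad G p :=
  funext fun _ ↦ dirDeriv_add hF hG

lemma spatialGrad_const (c : ℝ) : spatialGrad (fun _ ↦ c) p = 0 :=
  funext fun _ ↦ dirDeriv_const c

lemma spatialGrad_const_smul (c : ℝ) (hF : DifferentiableAt ℝ F p) :
    spatialGrad (c • F) p = c • spatialGrad F p :=
  funext fun _ ↦ dirDeriv_const_smul c hF

lemma spatialGrad_mul (hF : DifferentiableAt ℝ F p) (hG : DifferentiableAt ℝ G p) :
    spatialGrad (F * G) p = F p • spatialGrad G p + G p • spatialGrad F p :=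
  funext fun _ ↦ dirDeriv_mul hF hG

lemma spatialGrad_sum {ι : Type*} {s : Finset ι} {F : ι → Spacetime n → ℝ}
    (hF : ∀ k ∈ s, DifferentiableAt ℝ (F k) p) :
    spatialGrad (∑ k ∈ s, F k) p = ∑ k ∈ s, spatialGrad (F k) p := by
  ext i
  rw [Finset.sum_apply]
  exact dirDeriv_sum hF

lemma spatialHess_isSymm (hF : ContDiffAt ℝ 2 F p) : (spatialHess F p).IsSymm :=
  Matrix.IsSymm.ext fun _ _ ↦ dirDeriv_comm hF

lemma spatialHess_add (hF : ContDiffAt ℝ 2 F p) (hG : ContDiffAt ℝ 2 G p) :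
    spatialHess (F + G) p = spatialHess F p + spatialHess G p := by
  ext i j
  have hev : dirDeriv (spaceDir i) (F + G) =ᶠ[𝓝 p]
      dirDeriv (spaceDir i) F + dirDeriv (spaceDir i) G := by
    filter_upwards [eventually_differentiableAt hF, eventually_differentiableAt hG] with q hq hq'
    exact dirDeriv_add hq hq'
  exact (dirDeriv_congr hev).trans
    (dirDeriv_add (differentiableAt_dirDeriv hF) (differentiableAt_dirDeriv hG))

lemma spatialHess_const (c : ℝ) : spatialHess (fun _ ↦ c) p = 0 := by
  ext i j
  have h₀ : dirDeriv (spaceDir i) (fun _ ↦ c) = fun _ : Spacetime n ↦ (0 : ℝ) :=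
    funext fun _ ↦ dirDeriv_const c
  rw [spatialHess, Matrix.of_apply, h₀]
  exact dirDeriv_const 0

lemma spatialHess_const_smul (c : ℝ) (hF : ContDiffAt ℝ 2 F p) :
    spatialHess (c • F) p = c • spatialHess F p := by
  ext i j
  have hev : dirDeriv (spaceDir i) (c • F) =ᶠ[𝓝 p] c • dirDeriv (spaceDir i) F := by
    filter_upwards [eventually_differentiableAt hF] with q hq
    exact dirDeriv_const_smul c hq
  exact (dirDeriv_congr hev).trans (dirDeriv_const_smul c (differentiableAt_dirDeriv hF))

lemma spatialHess_sum {ι : Type*} {s : Finset ι} {F : ι → Spacetime n → ℝ}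
    (hF : ∀ k ∈ s, ContDiffAt ℝ 2 (F k) p) :
    spatialHess (∑ k ∈ s, F k) p = ∑ k ∈ s, spatialHess (F k) p := by
  ext i j
  have hev : dirDeriv (spaceDir i) (∑ k ∈ s, F k) =ᶠ[𝓝 p] ∑ k ∈ s, dirDeriv (spaceDir i) (F k) := by
    filter_upwards [s.eventually_all.2 fun k hk ↦ eventually_differentiableAt (hF k hk)] with q hq
    rw [dirDeriv_sum hq, Finset.sum_apply]
  rw [Matrix.sum_apply]
  exact (dirDeriv_congr hev).trans
    (dirDeriv_sum fun k hk ↦ differentiableAt_dirDeriv (hF k hk))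

lemma spatialHess_mul (hF : ContDiffAt ℝ 2 F p) (hG : ContDiffAt ℝ 2 G p) :
    spatialHess (F * G) p = F p • spatialHess G p + G p • spatialHess F p +
      (Matrix.vecMulVec (spatialGrad F p) (spatialGrad G p) +
        Matrix.vecMulVec (spatialGrad G p) (spatialGrad F p)) := by
  ext i j
  have hev : dirDeriv (spaceDir i) (F * G) =ᶠ[𝓝 p]
      F * dirDeriv (spaceDir i) G + G * dirDeriv (spaceDir i) F := by
    filter_upwards [eventually_differentiableAt hF, eventually_differentiableAt hG] with q hq hq'
    exact dirDeriv_mul hq hq'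
  have hF₁ := hF.differentiableAt (by simp)
  have hG₁ := hG.differentiableAt (by simp)
  have hF₂ := differentiableAt_dirDeriv (v := spaceDir i) hF
  have hG₂ := differentiableAt_dirDeriv (v := spaceDir i) hG
  refine (dirDeriv_congr hev).trans ?_
  rw [dirDeriv_add (hF₁.mul hG₂) (hG₁.mul hF₂), dirDeriv_mul hF₁ hG₂, dirDeriv_mul hG₁ hF₂]
  simp only [Matrix.add_apply, Matrix.smul_apply, smul_eq_mul, Matrix.vecMulVec_apply, spatialHess,
    Matrix.of_apply, spatialGrad]
  ring

lemma gradForm_eq_trace : gradForm a F G p =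
    (a * Matrix.vecMulVec (spatialGrad G p) (spatialGrad F p)).trace := by
  rw [gradForm, Matrix.toBilin'_apply', Matrix.mul_vecMulVec, Matrix.trace_vecMulVec,
    dotProduct_comm]

lemma gradForm_comm (ha : a.PosSemidef) : gradForm a F G p = gradForm a G F p :=
  (posSemidef_toBilin' ha).isSymm.eq _ _

lemma gradForm_self_nonneg (ha : a.PosSemidef) : 0 ≤ gradForm a F F p :=
  (posSemidef_toBilin' ha).isNonneg.nonneg _

lemma parabolicOp_add (hF : ContDiffAt ℝ 2 F p) (hG : ContDiffAt ℝ 2 G p) :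
    parabolicOp a (F + G) p = parabolicOp a F p + parabolicOp a G p := by
  rw [parabolicOp, spatialHess_add hF hG,
    dirDeriv_add (hF.differentiableAt (by simp)) (hG.differentiableAt (by simp)),
    Matrix.mul_add, Matrix.trace_add, parabolicOp, parabolicOp]
  ring

lemma parabolicOp_const (c : ℝ) : parabolicOp a (fun _ ↦ c) p = 0 := by
  simp [parabolicOp, spatialHess_const, dirDeriv_const]

lemma parabolicOp_const_smul (c : ℝ) (hF : ContDiffAt ℝ 2 F p) :
    parabolicOp a (c • F) p = c * parabolicOp a F p := by
  rw [parabolicOp, spatialHess_const_smul c hF,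
    dirDeriv_const_smul c (hF.differentiableAt (by simp)), Matrix.mul_smul, Matrix.trace_smul,
    parabolicOp, smul_eq_mul]
  ring

lemma parabolicOp_sum {ι : Type*} {s : Finset ι} {F : ι → Spacetime n → ℝ}
    (hF : ∀ k ∈ s, ContDiffAt ℝ 2 (F k) p) :
    parabolicOp a (∑ k ∈ s, F k) p = ∑ k ∈ s, parabolicOp a (F k) p := by
  simp only [parabolicOp, spatialHess_sum hF, Matrix.mul_sum, Matrix.trace_sum,
    dirDeriv_sum fun k hk ↦ (hF k hk).differentiableAt (by simp), Finset.sum_sub_distrib]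

lemma parabolicOp_mul (ha : a.PosSemidef) (hF : ContDiffAt ℝ 2 F p) (hG : ContDiffAt ℝ 2 G p) :
    parabolicOp a (F * G) p =
      F p * parabolicOp a G p + G p * parabolicOp a F p - 2 * gradForm a F G p := by
  have hsymm := gradForm_comm (F := F) (G := G) (p := p) ha
  rw [gradForm_eq_trace (F := G)] at hsymm
  rw [parabolicOp, spatialHess_mul hF hG,
    dirDeriv_mul (hF.differentiableAt (by simp)) (hG.differentiableAt (by simp))]
  simp only [Matrix.mul_add, Matrix.mul_smul, Matrix.trace_add, Matrix.trace_smul, smul_eq_mul,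
    ← hsymm, ← gradForm_eq_trace, parabolicOp]
  ring

lemma parabolicOp_sq (ha : a.PosSemidef) (hF : ContDiffAt ℝ 2 F p) :
    parabolicOp a (F ^ 2) p = 2 * F p * parabolicOp a F p - 2 * gradForm a F F p := by
  rw [sq, parabolicOp_mul ha hF hF]
  ring

lemma spatialGrad_sq (hF : DifferentiableAt ℝ F p) :
    spatialGrad (F ^ 2) p = (2 * F p) • spatialGrad F p := by
  rw [sq, spatialGrad_mul hF hF, ← add_smul, two_mul]

lemma gradForm_sq_left (hF : DifferentiableAt ℝ F p) :
    gradForm a (F ^ 2) G p = 2 * F p * gradForm a F G p := by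
  rw [gradForm, spatialGrad_sq hF, map_smul, LinearMap.smul_apply, smul_eq_mul, gradForm]

lemma spatialGrad_cube (hF : DifferentiableAt ℝ F p) :
    spatialGrad (F ^ 3) p = (3 * F p ^ 2) • spatialGrad F p := by
  rw [pow_succ, spatialGrad_mul (hF.pow 2) hF, spatialGrad_sq hF, smul_smul, ← add_smul,
    Pi.pow_apply]
  ring_nf

lemma parabolicOp_cube (ha : a.PosSemidef) (hF : ContDiffAt ℝ 2 F p) :
    parabolicOp a (F ^ 3) p = 3 * F p ^ 2 * parabolicOp a F p - 6 * F p * gradForm a F F p := by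
  have hF₂ : ContDiffAt ℝ 2 (F ^ 2) p := hF.pow 2
  rw [pow_succ, parabolicOp_mul ha hF₂ hF, parabolicOp_sq ha hF,
    gradForm_sq_left (hF.differentiableAt (by simp)), Pi.pow_apply]
  ring

lemma parabolicOp_time_mul (ha : a.PosSemidef) (c : ℝ) (hF : ContDiffAt ℝ 2 F p) :
    parabolicOp a ((fun q ↦ q.1 - c) * F) p = F p + (p.1 - c) * parabolicOp a F p := by
  have hd (q v : Spacetime n) : dirDeriv v (fun q : Spacetime n ↦ q.1 - c) q = v.1 :=
    have h : HasFDerivAt (fun q : Spacetime n ↦ q.1 - c) (.fst ℝ _ _) q :=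
      hasFDerivAt_fst.sub_const c
    dirDeriv_eq_of_hasFDerivAt h
  have hgrad (q : Spacetime n) : spatialGrad (fun q : Spacetime n ↦ q.1 - c) q = 0 :=
    funext fun i ↦ hd q (spaceDir i)
  have hop : parabolicOp a (fun q : Spacetime n ↦ q.1 - c) p = 1 := by
    have hHess : spatialHess (fun q : Spacetime n ↦ q.1 - c) p = 0 := by
      ext i j
      have h₀ : dirDeriv (spaceDir i) (fun q : Spacetime n ↦ q.1 - c) = fun _ ↦ 0 :=
        funext fun q ↦ hd q (spaceDir i)
      rw [spatialHess, Matrix.of_apply, h₀]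
      exact dirDeriv_const 0
    simp [parabolicOp, hd, hHess, timeDir]
  rw [parabolicOp_mul ha (contDiffAt_fst.sub contDiffAt_const) hF, hop, gradForm, hgrad, map_zero,
    LinearMap.zero_apply]
  ring

end ParabolicOperator

section MaximumPrinciple

lemma exists_first_touch {X : Type*} [TopologicalSpace X] [T2Space X] {K : Set X}
    (hK : IsCompact K) {G : ℝ × X → ℝ} {a b θ : ℝ} (hG : ContinuousOn G (Icc a b ×ˢ K))
    (hinit : ∀ x ∈ K, G (a, x) < θ) {q : ℝ × X} (hq : q ∈ Icc a b ×ˢ K) (hθ : θ ≤ G q) :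
    ∃ t ∈ Ioc a b, ∃ x ∈ K, G (t, x) = θ ∧ ∀ p ∈ Icc a t ×ˢ K, G p ≤ θ := by
  have hclosed : IsClosed (Icc a b ×ˢ K) := isClosed_Icc.prod hK.isClosed
  have hcompact : IsCompact ((Icc a b ×ˢ K) ∩ G ⁻¹' Ici θ) :=
    (isCompact_Icc.prod hK).of_isClosed_subset
      (hG.preimage_isClosed_of_isClosed hclosed isClosed_Ici) inter_subset_left
  obtain ⟨⟨t, x⟩, ⟨⟨ht, hx⟩, hGt⟩, hmin⟩ :=
    hcompact.exists_isMinOn ⟨q, hq, hθ⟩ continuous_fst.continuousOn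
  replace hmin : ∀ s ∈ Ico a t, ∀ y ∈ K, G (s, y) < θ := by
    intro s hs y hy
    by_contra! h
    exact hs.2.not_ge (hmin ⟨⟨⟨hs.1, hs.2.le.trans ht.2⟩, hy⟩, h⟩)
  have hat : a < t := ht.1.lt_of_ne fun h ↦ (hinit x hx).not_ge (h ▸ hGt)
  have hle : ∀ p ∈ Icc a t ×ˢ K, G p ≤ θ := by
    rintro ⟨s, y⟩ ⟨hs, hy⟩
    have hslice : ContinuousOn (fun s ↦ G (s, y)) (Icc a t) :=
      hG.comp (by fun_prop) fun s hs ↦ ⟨⟨hs.1, hs.2.trans ht.2⟩, hy⟩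
    rw [← closure_Ico hat.ne] at hs hslice
    exact le_on_closure (fun s hs ↦ (hmin s hs y hy).le) hslice continuousOn_const hs
  exact ⟨t, ⟨hat, ht.2⟩, x, hx, (hle _ ⟨⟨hat.le, le_rfl⟩, hx⟩).antisymm hGt, hle⟩

lemma deriv_deriv_nonpos_of_isLocalMax {g : ℝ → ℝ} {c : ℝ} (hg : ContinuousAt g c)
    (hmax : IsLocalMax g c) : deriv (deriv g) c ≤ 0 := by
  by_contra! hpos
  have hmin : IsLocalMin g c := isLocalMin_of_deriv_deriv_pos hpos hmax.deriv_eq_zero hg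
  have hconst : g =ᶠ[𝓝 c] fun _ ↦ g c := by
    filter_upwards [hmin, hmax] with s hs hs' using le_antisymm hs' hs
  have hzero : deriv (deriv g) c = 0 := by simpa using hconst.deriv.deriv_eq
  exact hpos.ne' hzero

lemma dirDeriv_dirDeriv_nonpos_of_isLocalMax {E : Type*} [NormedAddCommGroup E] [NormedSpace ℝ E]
    {F : E → ℝ} {p v : E} (hF : ContinuousAt F p)
    (hmax : IsLocalMax (fun s : ℝ ↦ F (p + s • v)) 0) :
    dirDeriv v (dirDeriv v F) p ≤ 0 := by
  have hline : (fun s : ℝ ↦ dirDeriv v F (p + s • v)) = deriv fun s : ℝ ↦ F (p + s • v) := by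
    funext s
    rw [← add_zero s, ← deriv_comp_const_add]
    simp only [dirDeriv, lineDeriv, add_smul, ← add_assoc, add_zero]
  have hcont : ContinuousAt (fun s : ℝ ↦ F (p + s • v)) 0 :=
    ContinuousAt.comp' (by simpa using hF) (by fun_prop)
  calc dirDeriv v (dirDeriv v F) p = deriv (deriv fun s : ℝ ↦ F (p + s • v)) 0 := by
        rw [← hline]; rfl
    _ ≤ 0 := deriv_deriv_nonpos_of_isLocalMax hcont hmax

variable {n : ℕ} {F : Spacetime n → ℝ} {p : Spacetime n} {a b θ t r : ℝ}
  {z x : EuclideanSpace ℝ (Fin n)}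

lemma dirDeriv_dirDeriv_sum_smul_spaceDir (hF : ContDiffAt ℝ 2 F p) (ξ : Fin n → ℝ) :
    dirDeriv (∑ i, ξ i • spaceDir i) (dirDeriv (∑ i, ξ i • spaceDir i) F) p =
      ξ ⬝ᵥ spatialHess F p *ᵥ ξ := by
  have hev : dirDeriv (∑ i, ξ i • spaceDir i) F =ᶠ[𝓝 p]
      ∑ i, ξ i • dirDeriv (spaceDir i) F := by
    filter_upwards [eventually_differentiableAt hF] with q hq
    simp [dirDeriv_sum_smul _ _ _ hq]
  rw [dirDeriv_congr hev,
    dirDeriv_sum fun i _ ↦ (differentiableAt_dirDeriv (v := spaceDir i) hF).const_smul (ξ i)]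
  refine Finset.sum_congr rfl fun i _ ↦ ?_
  rw [dirDeriv_const_smul _ (differentiableAt_dirDeriv hF),
    dirDeriv_sum_smul _ _ _ (differentiableAt_dirDeriv hF)]
  simp only [Matrix.mulVec, dotProduct, spatialHess, Matrix.of_apply, mul_comm]

lemma isLocalMax_line_of_spatial_max (hx : x ∈ ball z r)
    (hmax : ∀ y ∈ closedBall z r, F (t, y) ≤ F (t, x)) {v : Spacetime n} (hv : v.1 = 0) :
    IsLocalMax (fun s : ℝ ↦ F ((t, x) + s • v)) 0 := by
  have hcont : ContinuousAt (fun s : ℝ ↦ x + s • v.2) 0 := by fun_prop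
  filter_upwards [hcont.preimage_mem_nhds (isOpen_ball.mem_nhds (by simpa using hx))] with s hs
  have hline : (t, x) + s • v = (t, x + s • v.2) := by ext <;> simp [hv]
  simpa [hline] using hmax _ (ball_subset_closedBall hs)

lemma neg_spatialHess_posSemidef_of_spatial_max (hF : ContDiffAt ℝ 2 F (t, x)) (hx : x ∈ ball z r)
    (hmax : ∀ y ∈ closedBall z r, F (t, y) ≤ F (t, x)) :
    (-spatialHess F (t, x)).PosSemidef := by
  refine .of_dotProduct_mulVec_nonneg ?_ fun ξ ↦ ?_
  · simpa [Matrix.IsHermitian] using (spatialHess_isSymm hF).eq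
  · have hfst : (∑ i, ξ i • spaceDir i : Spacetime n).1 = 0 := by simp [Prod.fst_sum, spaceDir]
    have := dirDeriv_dirDeriv_nonpos_of_isLocalMax hF.continuousAt
      (isLocalMax_line_of_spatial_max hx hmax hfst)
    rw [dirDeriv_dirDeriv_sum_smul_spaceDir hF] at this
    simpa [Matrix.neg_mulVec] using this

lemma dirDeriv_timeDir_nonneg_of_max (hF : DifferentiableAt ℝ F (t, x)) (hat : a < t)
    (hx : x ∈ ball z r) (hmax : ∀ p ∈ Icc a t ×ˢ closedBall z r, F p ≤ F (t, x)) :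
    0 ≤ dirDeriv timeDir F (t, x) := by
  have hx' := ball_subset_closedBall hx
  have hcone : (a, x) - (t, x) ∈ posTangentConeAt (Icc a t ×ˢ closedBall z r) (t, x) :=
    sub_mem_posTangentConeAt_of_segment_subset <|
      ((convex_Icc a t).prod (convex_closedBall z r)).segment_subset
        ⟨⟨hat.le, le_rfl⟩, hx'⟩ ⟨⟨le_rfl, hat.le⟩, hx'⟩
  have hnonpos := (isMaxOn_iff.2 hmax).localize.hasFDerivWithinAt_nonpos
    hF.hasFDerivAt.hasFDerivWithinAt hcone
  have hdir : ((a, x) - (t, x) : Spacetime n) = (a - t) • timeDir := by ext <;> simp [timeDir]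
  rw [hdir, map_smul, smul_eq_mul, ← dirDeriv_eq_fderiv hF] at hnonpos
  exact nonneg_of_mul_nonpos_right hnonpos (sub_neg.2 hat)

theorem lt_of_parabolicOp_neg {A : Spacetime n → Matrix (Fin n) (Fin n) ℝ}
    (hFc : ContinuousOn F (Icc a b ×ˢ closedBall z r))
    (hF : ∀ p ∈ Ioc a b ×ˢ ball z r, ContDiffAt ℝ 2 F p)
    (hA : ∀ p ∈ Ioc a b ×ˢ ball z r, (A p).PosSemidef)
    (hinit : ∀ x ∈ closedBall z r, F (a, x) < θ)
    (hlat : ∀ t ∈ Icc a b, ∀ x ∈ sphere z r, F (t, x) < θ)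
    (hop : ∀ p ∈ Ioc a b ×ˢ ball z r, F p = θ → spatialGrad F p = 0 → parabolicOp (A p) F p < 0) :
    ∀ p ∈ Icc a b ×ˢ closedBall z r, F p < θ := by
  by_contra! ⟨q, hq, hθ⟩
  obtain ⟨t, ht, x, hx, htouch, hle⟩ :=
    exists_first_touch (isCompact_closedBall z r) hFc hinit hq hθ
  rw [← htouch] at hle
  have hxball : x ∈ ball z r := (mem_closedBall.1 hx).lt_of_ne fun h ↦
    (hlat t ⟨ht.1.le, ht.2⟩ x h).ne htouch
  have hC : ContDiffAt ℝ 2 F (t, x) := hF (t, x) ⟨ht, hxball⟩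
  have hspace : ∀ y ∈ closedBall z r, F (t, y) ≤ F (t, x) := fun y hy ↦
    hle _ ⟨⟨ht.1.le, le_rfl⟩, hy⟩
  have hgrad : spatialGrad F (t, x) = 0 := by
    ext i
    have hline : IsLocalMax (fun s : ℝ ↦ F ((t, x) + s • spaceDir i)) 0 :=
      isLocalMax_line_of_spatial_max hxball hspace rfl
    exact hline.deriv_eq_zero
  have htime := dirDeriv_timeDir_nonneg_of_max (hC.differentiableAt (by simp)) ht.1 hxball hle
  have htrace := posSemidef_trace_mul_nonneg (hA (t, x) ⟨ht, hxball⟩)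
    (neg_spatialHess_posSemidef_of_spatial_max hC hxball hspace)
  rw [Matrix.mul_neg, Matrix.trace_neg] at htrace
  have hneg : parabolicOp (A (t, x)) F (t, x) < 0 := hop (t, x) ⟨ht, hxball⟩ htouch hgrad
  exact hneg.not_ge (sub_nonneg.2 ((neg_nonneg.1 htrace).trans htime))

end MaximumPrinciple

section MCFMatrix

variable {n : ℕ} (P x : Fin n → ℝ)

/-- The coefficient matrix `δᵢⱼ - PᵢPⱼ / (1 + |P|²)` of the graphical mean curvature flow equation
at a point where the spatial gradient is `P`. -/
noncomputable def mcfMatrix : Matrix (Fin n) (Fin n) ℝ :=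
  1 - (1 + P ⬝ᵥ P)⁻¹ • Matrix.vecMulVec P P

lemma dotProduct_self_nonneg : 0 ≤ P ⬝ᵥ P :=
  Finset.sum_nonneg fun _ _ ↦ mul_self_nonneg _

lemma one_add_dotProduct_self_pos : 0 < 1 + P ⬝ᵥ P :=
  add_pos_of_pos_of_nonneg one_pos (dotProduct_self_nonneg P)

lemma mcfMatrix_apply (i j : Fin n) :
    mcfMatrix P i j = (if i = j then 1 else 0) - P i * P j * (1 + P ⬝ᵥ P)⁻¹ := by
  simp [mcfMatrix, Matrix.one_apply, Matrix.vecMulVec_apply, mul_comm]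

lemma mcfMatrix_toBilin' (y : Fin n → ℝ) :
    (mcfMatrix P).toBilin' x y = x ⬝ᵥ y - (1 + P ⬝ᵥ P)⁻¹ * ((P ⬝ᵥ x) * (P ⬝ᵥ y)) := by
  rw [Matrix.toBilin'_apply', mcfMatrix, Matrix.sub_mulVec, Matrix.one_mulVec, Matrix.smul_mulVec,
    Matrix.vecMulVec_mulVec, dotProduct_sub, dotProduct_smul, dotProduct_smul, dotProduct_comm x P,
    op_smul_eq_smul, smul_eq_mul, smul_eq_mul, mul_comm (P ⬝ᵥ y)]

lemma inv_mul_dotProduct_le_mcfMatrix :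
    (1 + P ⬝ᵥ P)⁻¹ * (x ⬝ᵥ x) ≤ (mcfMatrix P).toBilin' x x := by
  have hCS : (P ⬝ᵥ x) ^ 2 ≤ (P ⬝ᵥ P) * (x ⬝ᵥ x) := by
    simpa only [dotProduct, ← sq] using Finset.sum_mul_sq_le_sq_mul_sq Finset.univ P x
  have hpos := one_add_dotProduct_self_pos P
  have hcancel : x ⬝ᵥ x = (1 + P ⬝ᵥ P)⁻¹ * ((1 + P ⬝ᵥ P) * (x ⬝ᵥ x)) := by field_simp
  rw [mcfMatrix_toBilin', hcancel, ← mul_sub, ← hcancel, ← sq]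
  gcongr
  linarith

lemma mcfMatrix_toBilin'_self_le : (mcfMatrix P).toBilin' x x ≤ x ⬝ᵥ x := by
  have := one_add_dotProduct_self_pos P
  rw [mcfMatrix_toBilin', sub_le_self_iff, ← sq]
  positivity

lemma mcfMatrix_toBilin'_grad :
    (mcfMatrix P).toBilin' P P = (1 + P ⬝ᵥ P)⁻¹ * (P ⬝ᵥ P) := by
  have := one_add_dotProduct_self_pos P
  rw [mcfMatrix_toBilin']
  field_simp
  ring

lemma mcfMatrix_posSemidef : (mcfMatrix P).PosSemidef := by
  refine .of_dotProduct_mulVec_nonneg ?_ fun x ↦ ?_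
  · ext i j
    simp [mcfMatrix_apply, eq_comm, mul_comm]
  · have hpos := one_add_dotProduct_self_pos P
    have hx : 0 ≤ x ⬝ᵥ x := dotProduct_self_nonneg x
    rw [star_trivial, ← Matrix.toBilin'_apply']
    exact (mul_nonneg (inv_nonneg.2 hpos.le) hx).trans (inv_mul_dotProduct_le_mcfMatrix P x)

lemma mcfMatrix_trace_le : (mcfMatrix P).trace ≤ n := by
  have hpos := one_add_dotProduct_self_pos P
  have hP : 0 ≤ P ⬝ᵥ P := dotProduct_self_nonneg P
  rw [mcfMatrix, Matrix.trace_sub, Matrix.trace_smul, Matrix.trace_one, Matrix.trace_vecMulVec,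
    Fintype.card_fin, sub_le_self_iff]
  exact mul_nonneg (inv_nonneg.2 hpos.le) hP

end MCFMatrix

section DifferentiatedEquation

variable {n : ℕ} {u : Spacetime n → ℝ} {p v : Spacetime n}

lemma spatialHess_dirDeriv (hu : ContDiffAt ℝ 3 u p) (i j : Fin n) :
    spatialHess (dirDeriv v u) p i j = dirDeriv v (fun q ↦ spatialHess u q i j) p := by
  have hev : dirDeriv (spaceDir i) (dirDeriv v u) =ᶠ[𝓝 p] dirDeriv v (dirDeriv (spaceDir i) u) := by
    filter_upwards [hu.eventually (by simp)] with q hq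
    exact dirDeriv_comm (hq.of_le (by norm_num))
  exact (dirDeriv_congr hev).trans
    (dirDeriv_comm (contDiffAt_dirDeriv hu (by norm_num [two_add_one_eq_three])))

lemma dirDeriv_trace_mul {A B : Spacetime n → Matrix (Fin n) (Fin n) ℝ}
    (hA : ∀ i j, DifferentiableAt ℝ (fun q ↦ A q i j) p)
    (hB : ∀ i j, DifferentiableAt ℝ (fun q ↦ B q i j) p) :
    dirDeriv v (fun q ↦ (A q * B q).trace) p =
      ((Matrix.of fun i j ↦ dirDeriv v (fun q ↦ A q i j) p) * B p).trace +
        (A p * Matrix.of fun i j ↦ dirDeriv v (fun q ↦ B q i j) p).trace := by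
  have hAB (i j : Fin n) : DifferentiableAt ℝ ((fun q ↦ A q i j) * fun q ↦ B q j i) p :=
    (hA i j).mul (hB j i)
  have htrace : (fun q ↦ (A q * B q).trace) = ∑ i, ∑ j, (fun q ↦ A q i j) * fun q ↦ B q j i := by
    ext q
    simp [Matrix.trace, Matrix.mul_apply, Finset.sum_apply]
  rw [htrace, dirDeriv_sum fun i _ ↦ .sum fun j _ ↦ hAB i j]
  simp only [dirDeriv_sum fun j _ ↦ hAB _ j, dirDeriv_mul (hA _ _) (hB _ _), Matrix.trace,
    Matrix.diag_apply, Matrix.mul_apply, Matrix.of_apply, Finset.sum_add_distrib]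
  simp only [mul_comm (B p _ _)]
  ring

lemma dirDeriv_parabolicOp {A : Spacetime n → Matrix (Fin n) (Fin n) ℝ}
    (hu : ContDiffAt ℝ 3 u p) (hA : ∀ i j, DifferentiableAt ℝ (fun q ↦ A q i j) p) :
    dirDeriv v (fun q ↦ parabolicOp (A q) u q) p = parabolicOp (A p) (dirDeriv v u) p -
      ((Matrix.of fun i j ↦ dirDeriv v (fun q ↦ A q i j) p) * spatialHess u p).trace := by
  have hD (w : Spacetime n) : ContDiffAt ℝ 2 (dirDeriv w u) p :=
    contDiffAt_dirDeriv hu (by norm_num [two_add_one_eq_three])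
  have hH (i j : Fin n) : DifferentiableAt ℝ (fun q ↦ spatialHess u q i j) p :=
    differentiableAt_dirDeriv (hD _)
  have htrace : DifferentiableAt ℝ (fun q ↦ (A q * spatialHess u q).trace) p := by
    simp only [Matrix.trace, Matrix.diag_apply, Matrix.mul_apply]
    exact .fun_sum fun i _ ↦ .fun_sum fun j _ ↦ (hA i j).mul (hH j i)
  have hop : (fun q ↦ parabolicOp (A q) u q) =
      dirDeriv timeDir u + (-1 : ℝ) • fun q ↦ (A q * spatialHess u q).trace := by
    ext q
    simp [parabolicOp, sub_eq_add_neg]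
  have hHess : (Matrix.of fun i j ↦ dirDeriv v (fun q ↦ spatialHess u q i j) p) =
      spatialHess (dirDeriv v u) p :=
    Matrix.ext fun i j ↦ (spatialHess_dirDeriv hu i j).symm
  rw [hop, dirDeriv_add ((hD _).differentiableAt (by simp)) (htrace.const_smul _),
    dirDeriv_const_smul _ htrace, dirDeriv_trace_mul hA hH, hHess,
    dirDeriv_comm (hu.of_le (by norm_num)), parabolicOp]
  ring

end DifferentiatedEquation

section GraphicalFlow

variable {n : ℕ} {u : Spacetime n → ℝ} {p v : Spacetime n}

/-- `u` is of class `C⁴` near `p` and solves the graphical mean curvature flow equation near `p`.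
Four derivatives are what is needed to write down the evolution equation of `|D²u|²`. -/
structure IsMCFAt (u : Spacetime n → ℝ) (p : Spacetime n) : Prop where
  contDiffAt : ContDiffAt ℝ 4 u p
  eventually_eq : ∀ᶠ q in 𝓝 p, parabolicOp (mcfMatrix (spatialGrad u q)) u q = 0

lemma IsMCFAt.eventually (hu : IsMCFAt u p) : ∀ᶠ q in 𝓝 p, IsMCFAt u q := by
  filter_upwards [hu.contDiffAt.eventually (by simp), hu.eventually_eq.eventually_nhds] with q h₁ h₂
  exact ⟨h₁, h₂⟩

lemma IsMCFAt.parabolicOp_eq_zero (hu : IsMCFAt u p) :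
    parabolicOp (mcfMatrix (spatialGrad u p)) u p = 0 :=
  hu.eventually_eq.self_of_nhds

/-- The square `1 + |Du|²` of the area element of the graph of `u`. -/
noncomputable def areaSq (u : Spacetime n → ℝ) (p : Spacetime n) : ℝ :=
  1 + spatialGrad u p ⬝ᵥ spatialGrad u p

lemma areaSq_eq_add_sum : areaSq u = (fun _ ↦ 1) + ∑ k, dirDeriv (spaceDir k) u ^ 2 := by
  ext q
  simp [areaSq, dotProduct, spatialGrad, sq, Finset.sum_apply]

lemma areaSq_pos : 0 < areaSq u p :=
  one_add_dotProduct_self_pos _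

lemma one_le_areaSq : 1 ≤ areaSq u p :=
  le_add_of_nonneg_right (dotProduct_self_nonneg _)

lemma contDiffAt_areaSq {m k : ℕ∞ω} (hu : ContDiffAt ℝ m u p) (hk : k + 1 ≤ m) :
    ContDiffAt ℝ k (areaSq u) p := by
  rw [areaSq_eq_add_sum]
  refine contDiffAt_const.add ?_
  rw [Finset.sum_fn]
  exact .sum fun i _ ↦ (contDiffAt_dirDeriv hu hk).pow 2

lemma dirDeriv_areaSq (hu : ContDiffAt ℝ 2 u p) : dirDeriv v (areaSq u) p =
    2 * (spatialGrad u p ⬝ᵥ spatialGrad (dirDeriv v u) p) := by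
  have hD (k : Fin n) := differentiableAt_dirDeriv (v := spaceDir k) hu
  rw [areaSq_eq_add_sum, dirDeriv_add (differentiableAt_const _) (.sum fun k _ ↦ (hD k).pow 2),
    dirDeriv_sum fun k _ ↦ (hD k).pow 2, dirDeriv_const, zero_add, dotProduct, Finset.mul_sum]
  refine Finset.sum_congr rfl fun k _ ↦ ?_
  rw [sq, dirDeriv_mul (hD _) (hD _), dirDeriv_comm hu, spatialGrad, spatialGrad]
  ring

lemma spatialGrad_areaSq (hu : ContDiffAt ℝ 2 u p) :
    spatialGrad (areaSq u) p = (2 : ℝ) • (spatialHess u p *ᵥ spatialGrad u p) := by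
  ext i
  rw [spatialGrad, dirDeriv_areaSq hu, dotProduct_comm]
  rfl

lemma spatialGrad_areaSq_eq_sum (hu : ContDiffAt ℝ 2 u p) : spatialGrad (areaSq u) p =
    (2 : ℝ) • ∑ k, spatialGrad u p k • spatialGrad (dirDeriv (spaceDir k) u) p := by
  ext i
  rw [spatialGrad, dirDeriv_areaSq hu, Pi.smul_apply, Finset.sum_apply]
  exact congrArg (2 * ·) (Finset.sum_congr rfl fun k _ ↦
    congrArg (spatialGrad u p k * ·) (dirDeriv_comm hu))

lemma mcfMatrix_spatialGrad_eq (i j : Fin n) :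
    (fun q ↦ mcfMatrix (spatialGrad u q) i j) = (fun _ ↦ if i = j then 1 else 0) +
      (-1 : ℝ) • (dirDeriv (spaceDir i) u * dirDeriv (spaceDir j) u * (areaSq u)⁻¹) := by
  ext q
  simp [mcfMatrix_apply, areaSq, spatialGrad, sub_eq_add_neg]

lemma contDiffAt_mcfMatrix {m k : ℕ∞ω} (hu : ContDiffAt ℝ m u p) (hk : k + 1 ≤ m) (i j : Fin n) :
    ContDiffAt ℝ k (fun q ↦ mcfMatrix (spatialGrad u q) i j) p := by
  rw [mcfMatrix_spatialGrad_eq]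
  have hQ := (contDiffAt_areaSq hu hk).inv areaSq_pos.ne'
  exact contDiffAt_const.add (contDiffAt_const.mul
    (((contDiffAt_dirDeriv hu hk).mul (contDiffAt_dirDeriv hu hk)).mul hQ))

lemma dirDeriv_mcfMatrix (hu : ContDiffAt ℝ 2 u p) :
    (Matrix.of fun i j ↦ dirDeriv v (fun q ↦ mcfMatrix (spatialGrad u q) i j) p) =
      (2 * (areaSq u p)⁻¹ ^ 2 * (spatialGrad u p ⬝ᵥ spatialGrad (dirDeriv v u) p)) •
          Matrix.vecMulVec (spatialGrad u p) (spatialGrad u p) -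
        (areaSq u p)⁻¹ • (Matrix.vecMulVec (spatialGrad u p) (spatialGrad (dirDeriv v u) p) +
          Matrix.vecMulVec (spatialGrad (dirDeriv v u) p) (spatialGrad u p)) := by
  have hd (k : Fin n) := differentiableAt_dirDeriv (v := spaceDir k) hu
  have hQ : DifferentiableAt ℝ (areaSq u) p :=
    (contDiffAt_areaSq (k := 1) hu (by norm_num [one_add_one_eq_two])).differentiableAt (by simp)
  have hW : DifferentiableAt ℝ (areaSq u)⁻¹ p := hQ.inv areaSq_pos.ne'
  ext i j
  rw [Matrix.of_apply, mcfMatrix_spatialGrad_eq, dirDeriv_add (differentiableAt_const _)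
      ((((hd i).mul (hd j)).mul hW).const_smul _), dirDeriv_const,
    dirDeriv_const_smul _ (((hd i).mul (hd j)).mul hW), dirDeriv_mul ((hd i).mul (hd j)) hW,
    dirDeriv_mul (hd i) (hd j), dirDeriv_inv hQ areaSq_pos.ne', dirDeriv_areaSq hu,
    dirDeriv_comm (v := v) (w := spaceDir i) hu, dirDeriv_comm (v := v) (w := spaceDir j) hu]
  simp only [Matrix.sub_apply, Matrix.add_apply, Matrix.smul_apply, Matrix.vecMulVec_apply,
    smul_eq_mul, spatialGrad, Pi.mul_apply, Pi.inv_apply]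
  ring

lemma IsMCFAt.parabolicOp_dirDeriv_eq_trace (hu : IsMCFAt u p) :
    parabolicOp (mcfMatrix (spatialGrad u p)) (dirDeriv v u) p =
      ((Matrix.of fun i j ↦ dirDeriv v (fun q ↦ mcfMatrix (spatialGrad u q) i j) p) *
        spatialHess u p).trace := by
  have hdiff := dirDeriv_parabolicOp (v := v) (hu.contDiffAt.of_le (by norm_num)) fun i j ↦
    (contDiffAt_mcfMatrix (k := 3) hu.contDiffAt (by norm_num) i j).differentiableAt (by simp)
  have hzero : dirDeriv v (fun q ↦ parabolicOp (mcfMatrix (spatialGrad u q)) u q) p = 0 :=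
    (dirDeriv_congr hu.eventually_eq).trans (dirDeriv_const 0)
  linarith

theorem IsMCFAt.parabolicOp_dirDeriv (hu : IsMCFAt u p) :
    parabolicOp (mcfMatrix (spatialGrad u p)) (dirDeriv v u) p =
      -(areaSq u p)⁻¹ * gradForm (mcfMatrix (spatialGrad u p)) (dirDeriv v u) (areaSq u) p := by
  have hu₂ : ContDiffAt ℝ 2 u p := hu.contDiffAt.of_le (by norm_num)
  have htransp (x : Fin n → ℝ) : x ᵥ* spatialHess u p = spatialHess u p *ᵥ x := by
    rw [← Matrix.mulVec_transpose, (spatialHess_isSymm hu₂).eq]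
  have hswap (x : Fin n → ℝ) : spatialGrad u p ⬝ᵥ (spatialHess u p *ᵥ x) =
      x ⬝ᵥ (spatialHess u p *ᵥ spatialGrad u p) := by
    rw [Matrix.dotProduct_mulVec, htransp, dotProduct_comm]
  rw [hu.parabolicOp_dirDeriv_eq_trace, dirDeriv_mcfMatrix hu₂, gradForm, mcfMatrix_toBilin',
    spatialGrad_areaSq hu₂]
  simp only [Matrix.sub_mul, Matrix.add_mul, Matrix.smul_mul, Matrix.vecMulVec_mul,
    Matrix.trace_sub, Matrix.trace_add, Matrix.trace_smul, Matrix.trace_vecMulVec, htransp,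
    hswap (spatialGrad (dirDeriv v u) p), smul_eq_mul, dotProduct_smul]
  rw [show 1 + spatialGrad u p ⬝ᵥ spatialGrad u p = areaSq u p from rfl]
  ring

theorem IsMCFAt.parabolicOp_areaSq (hu : IsMCFAt u p) :
    parabolicOp (mcfMatrix (spatialGrad u p)) (areaSq u) p =
      -(areaSq u p)⁻¹ * gradForm (mcfMatrix (spatialGrad u p)) (areaSq u) (areaSq u) p -
        2 * ∑ k, gradForm (mcfMatrix (spatialGrad u p)) (dirDeriv (spaceDir k) u)
          (dirDeriv (spaceDir k) u) p := by
  set a := mcfMatrix (spatialGrad u p)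
  have hD (k : Fin n) : ContDiffAt ℝ 2 (dirDeriv (spaceDir k) u) p :=
    contDiffAt_dirDeriv hu.contDiffAt (by norm_num)
  have hsq (k : Fin n) : ContDiffAt ℝ 2 (dirDeriv (spaceDir k) u ^ 2) p := (hD k).pow 2
  have hform : gradForm a (areaSq u) (areaSq u) p = 2 * ∑ k, dirDeriv (spaceDir k) u p *
      gradForm a (dirDeriv (spaceDir k) u) (areaSq u) p := by
    rw [gradForm]
    conv_lhs => enter [1]; rw [spatialGrad_areaSq_eq_sum (hu.contDiffAt.of_le (by norm_num))]
    simp [LinearMap.sum_apply, gradForm, spatialGrad]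
  have hop : parabolicOp a (areaSq u) p = ∑ k, parabolicOp a (dirDeriv (spaceDir k) u ^ 2) p := by
    rw [areaSq_eq_add_sum, parabolicOp_add contDiffAt_const, parabolicOp_const, zero_add,
      parabolicOp_sum fun k _ ↦ hsq k]
    rw [Finset.sum_fn]
    exact .sum fun k _ ↦ hsq k
  rw [hop, hform, Finset.mul_sum, Finset.mul_sum, Finset.mul_sum, ← Finset.sum_sub_distrib]
  refine Finset.sum_congr rfl fun k _ ↦ ?_
  rw [parabolicOp_sq (mcfMatrix_posSemidef _) (hD k), hu.parabolicOp_dirDeriv]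
  ring

lemma gradForm_areaSq_le {a : Matrix (Fin n) (Fin n) ℝ} (ha : a.PosSemidef)
    (hu : ContDiffAt ℝ 2 u p) : gradForm a (areaSq u) (areaSq u) p ≤
      4 * areaSq u p * ∑ k, gradForm a (dirDeriv (spaceDir k) u) (dirDeriv (spaceDir k) u) p := by
  have hCS := bilinForm_sum_smul_self_le (posSemidef_toBilin' ha) Finset.univ (spatialGrad u p)
    fun k ↦ spatialGrad (dirDeriv (spaceDir k) u) p
  have hP : ∑ k, spatialGrad u p k ^ 2 ≤ areaSq u p := by
    simp [areaSq, dotProduct, sq]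
  have hS : 0 ≤ ∑ k, gradForm a (dirDeriv (spaceDir k) u) (dirDeriv (spaceDir k) u) p :=
    Finset.sum_nonneg fun _ _ ↦ gradForm_self_nonneg ha
  simp only [gradForm, spatialGrad_areaSq_eq_sum hu, map_smul, LinearMap.smul_apply, smul_eq_mul]
    at hS ⊢
  linarith [hCS.trans (mul_le_mul_of_nonneg_right hP hS)]

lemma IsMCFAt.areaSq_mul_parabolicOp_areaSq_le (hu : IsMCFAt u p) :
    areaSq u p * parabolicOp (mcfMatrix (spatialGrad u p)) (areaSq u) p ≤
      -(3 / 2) * gradForm (mcfMatrix (spatialGrad u p)) (areaSq u) (areaSq u) p := by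
  have hCS := gradForm_areaSq_le (mcfMatrix_posSemidef (spatialGrad u p))
    (hu.contDiffAt.of_le (by norm_num))
  rw [hu.parabolicOp_areaSq, mul_sub, ← mul_assoc, mul_neg, mul_inv_cancel₀ areaSq_pos.ne']
  linarith

/-- The squared Frobenius norm `|D²u|²` of the spatial Hessian. -/
noncomputable def hessSq (u : Spacetime n → ℝ) (p : Spacetime n) : ℝ :=
  ∑ k, ∑ l, spatialHess u p k l ^ 2

lemma hessSq_nonneg : 0 ≤ hessSq u p :=
  Finset.sum_nonneg fun _ _ ↦ Finset.sum_nonneg fun _ _ ↦ sq_nonneg _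

lemma inv_mul_hessSq_le_sum_gradForm : (areaSq u p)⁻¹ * hessSq u p ≤
    ∑ k, gradForm (mcfMatrix (spatialGrad u p)) (dirDeriv (spaceDir k) u)
      (dirDeriv (spaceDir k) u) p := by
  rw [hessSq, Finset.mul_sum]
  refine Finset.sum_le_sum fun k _ ↦ ?_
  have hW := inv_mul_dotProduct_le_mcfMatrix (spatialGrad u p)
    (spatialGrad (dirDeriv (spaceDir k) u) p)
  simp only [dotProduct.eq_1 (spatialGrad (dirDeriv _ u) p), ← sq] at hW
  exact hW

lemma IsMCFAt.parabolicOp_areaSq_le (hu : IsMCFAt u p) :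
    parabolicOp (mcfMatrix (spatialGrad u p)) (areaSq u) p ≤
      -2 * ((areaSq u p)⁻¹ * hessSq u p) := by
  have hA := gradForm_self_nonneg (F := areaSq u) (p := p) (mcfMatrix_posSemidef (spatialGrad u p))
  have hW := mul_nonneg (inv_nonneg.2 (areaSq_pos (u := u) (p := p)).le) hA
  have hS := inv_mul_hessSq_le_sum_gradForm (u := u) (p := p)
  rw [hu.parabolicOp_areaSq]
  linarith

end GraphicalFlow

section JetBounds

variable {n : ℕ} {u F G : Spacetime n → ℝ} {p : Spacetime n} {b₀ b₁ b₂ c₀ c₁ c₂ H T : ℝ}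

/-- Bounds at `p` for a `C²` function and its spatial partial derivatives of first and second
order. -/
structure JetBound (F : Spacetime n → ℝ) (p : Spacetime n) (b₀ b₁ b₂ : ℝ) : Prop where
  contDiffAt : ContDiffAt ℝ 2 F p
  abs_le : |F p| ≤ b₀
  abs_spatialGrad_le : ∀ i, |spatialGrad F p i| ≤ b₁
  abs_spatialHess_le : ∀ i j, |spatialHess F p i j| ≤ b₂

lemma JetBound.mono (hF : JetBound F p b₀ b₁ b₂) (h₀ : b₀ ≤ c₀) (h₁ : b₁ ≤ c₁) (h₂ : b₂ ≤ c₂) :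
    JetBound F p c₀ c₁ c₂ :=
  ⟨hF.contDiffAt, hF.abs_le.trans h₀, fun i ↦ (hF.abs_spatialGrad_le i).trans h₁,
    fun i j ↦ (hF.abs_spatialHess_le i j).trans h₂⟩

lemma JetBound.const (c : ℝ) : JetBound (fun _ : Spacetime n ↦ c) p |c| 0 0 where
  contDiffAt := contDiffAt_const
  abs_le := le_rfl
  abs_spatialGrad_le i := by simp [spatialGrad_const]
  abs_spatialHess_le i j := by simp [spatialHess_const]

lemma JetBound.add (hF : JetBound F p b₀ b₁ b₂) (hG : JetBound G p c₀ c₁ c₂) :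
    JetBound (F + G) p (b₀ + c₀) (b₁ + c₁) (b₂ + c₂) where
  contDiffAt := hF.contDiffAt.add hG.contDiffAt
  abs_le := (abs_add_le _ _).trans (add_le_add hF.abs_le hG.abs_le)
  abs_spatialGrad_le i := by
    rw [spatialGrad_add (hF.contDiffAt.differentiableAt (by simp))
      (hG.contDiffAt.differentiableAt (by simp))]
    exact (abs_add_le _ _).trans (add_le_add (hF.abs_spatialGrad_le i) (hG.abs_spatialGrad_le i))
  abs_spatialHess_le i j := by
    rw [spatialHess_add hF.contDiffAt hG.contDiffAt]
    exact (abs_add_le _ _).trans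
      (add_le_add (hF.abs_spatialHess_le i j) (hG.abs_spatialHess_le i j))

lemma JetBound.sum {ι : Type*} {s : Finset ι} {F : ι → Spacetime n → ℝ}
    (hF : ∀ k ∈ s, JetBound (F k) p b₀ b₁ b₂) :
    JetBound (∑ k ∈ s, F k) p (s.card * b₀) (s.card * b₁) (s.card * b₂) := by
  classical
  induction s using Finset.induction_on with
  | empty => exact (JetBound.const 0).mono (by simp) (by simp) (by simp)
  | insert k s hk ih =>
    rw [Finset.sum_insert hk, Finset.card_insert_of_notMem hk]
    refine ((hF k (by simp)).add (ih fun l hl ↦ hF l (by simp [hl]))).mono ?_ ?_ ?_ <;>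
      exact le_of_eq (by push_cast; ring)

lemma JetBound.mul (hF : JetBound F p b₀ b₁ b₂) (hG : JetBound G p c₀ c₁ c₂) :
    JetBound (F * G) p (b₀ * c₀) (b₀ * c₁ + c₀ * b₁)
      (b₀ * c₂ + c₀ * b₂ + (b₁ * c₁ + c₁ * b₁)) where
  contDiffAt := hF.contDiffAt.mul hG.contDiffAt
  abs_le := (abs_mul _ _).trans_le (mul_le_mul hF.abs_le hG.abs_le (abs_nonneg _)
    ((abs_nonneg _).trans hF.abs_le))
  abs_spatialGrad_le i := by
    have hb₀ := (abs_nonneg _).trans hF.abs_le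
    have hc₀ := (abs_nonneg _).trans hG.abs_le
    rw [spatialGrad_mul (hF.contDiffAt.differentiableAt (by simp))
      (hG.contDiffAt.differentiableAt (by simp))]
    refine (abs_add_le _ _).trans ?_
    simp only [Pi.smul_apply, smul_eq_mul, abs_mul]
    gcongr
    exacts [hF.abs_le, hG.abs_spatialGrad_le i, hG.abs_le, hF.abs_spatialGrad_le i]
  abs_spatialHess_le i j := by
    have hb₀ := (abs_nonneg _).trans hF.abs_le
    have hc₀ := (abs_nonneg _).trans hG.abs_le
    have hb₁ := (abs_nonneg _).trans (hF.abs_spatialGrad_le i)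
    have hc₁ := (abs_nonneg _).trans (hG.abs_spatialGrad_le i)
    rw [spatialHess_mul hF.contDiffAt hG.contDiffAt]
    refine (abs_add_le _ _).trans (add_le_add ((abs_add_le _ _).trans ?_)
      ((abs_add_le _ _).trans ?_)) <;>
    simp only [Matrix.smul_apply, Matrix.vecMulVec_apply, smul_eq_mul, abs_mul] <;>
    gcongr
    exacts [hF.abs_le, hG.abs_spatialHess_le i j, hG.abs_le, hF.abs_spatialHess_le i j,
      hF.abs_spatialGrad_le i, hG.abs_spatialGrad_le j, hG.abs_spatialGrad_le i,
      hF.abs_spatialGrad_le j]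

lemma spatialHess_inv (hF : ContDiffAt ℝ 2 F p) (h₀ : F p ≠ 0) :
    spatialHess F⁻¹ p = (2 * (F p)⁻¹ ^ 3) • Matrix.vecMulVec (spatialGrad F p) (spatialGrad F p) -
      ((F p)⁻¹ ^ 2) • spatialHess F p := by
  have hd := hF.differentiableAt (by simp)
  ext i j
  have hev : dirDeriv (spaceDir i) F⁻¹ =ᶠ[𝓝 p]
      (-1 : ℝ) • (F⁻¹ * F⁻¹ * dirDeriv (spaceDir i) F) := by
    filter_upwards [eventually_differentiableAt hF, hF.continuousAt.eventually_ne h₀] with q hq hq₀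
    rw [dirDeriv_inv hq hq₀]
    simp [sq]
  have hi : DifferentiableAt ℝ F⁻¹ p := hd.inv h₀
  have hDi := differentiableAt_dirDeriv (v := spaceDir i) hF
  refine (dirDeriv_congr hev).trans ?_
  rw [dirDeriv_const_smul _ ((hi.mul hi).mul hDi), dirDeriv_mul (hi.mul hi) hDi,
    dirDeriv_mul hi hi, dirDeriv_inv hd h₀]
  simp only [Matrix.sub_apply, Matrix.smul_apply, Matrix.vecMulVec_apply, smul_eq_mul, spatialGrad,
    spatialHess, Matrix.of_apply, Pi.mul_apply, Pi.inv_apply]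
  ring

lemma JetBound.inv (hF : JetBound F p b₀ b₁ b₂) (h₁ : 1 ≤ F p) :
    JetBound F⁻¹ p 1 b₁ (2 * b₁ ^ 2 + b₂) := by
  have hpos : 0 < F p := one_pos.trans_le h₁
  have hle : |(F p)⁻¹| ≤ 1 := by
    rw [abs_of_pos (inv_pos.2 hpos)]
    exact inv_le_one_of_one_le₀ h₁
  have hpow (m : ℕ) : |(F p)⁻¹| ^ m ≤ 1 := pow_le_one₀ (abs_nonneg _) hle
  refine ⟨hF.contDiffAt.inv hpos.ne', hle, fun i ↦ ?_, fun i j ↦ ?_⟩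
  · rw [spatialGrad, dirDeriv_inv (hF.contDiffAt.differentiableAt (by simp)) hpos.ne', abs_mul,
      abs_neg, abs_pow]
    exact (mul_le_of_le_one_left (abs_nonneg _) (hpow 2)).trans (hF.abs_spatialGrad_le i)
  · rw [spatialHess_inv hF.contDiffAt hpos.ne']
    refine (abs_sub _ _).trans (add_le_add ?_ ?_)
    · simp only [Matrix.smul_apply, Matrix.vecMulVec_apply, smul_eq_mul, abs_mul, abs_pow, abs_two,
        mul_assoc, sq b₁]
      refine mul_le_mul_of_nonneg_left ?_ two_pos.le
      refine (mul_le_of_le_one_left (by positivity) (hpow 3)).trans ?_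
      exact mul_le_mul (hF.abs_spatialGrad_le i) (hF.abs_spatialGrad_le j) (abs_nonneg _)
        ((abs_nonneg _).trans (hF.abs_spatialGrad_le i))
    · simp only [Matrix.smul_apply, smul_eq_mul, abs_mul, abs_pow]
      exact (mul_le_of_le_one_left (abs_nonneg _) (hpow 2)).trans (hF.abs_spatialHess_le i j)

lemma jetBound_areaSq (hu : ∀ k, JetBound (dirDeriv (spaceDir k) u) p 1 H T) :
    JetBound (areaSq u) p (1 + n) (2 * n * H) (2 * n * T + 2 * n * H ^ 2) := by
  have hsum := JetBound.sum (s := Finset.univ) fun k _ ↦ (hu k).mul (hu k)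
  rw [areaSq_eq_add_sum]
  simp only [sq (dirDeriv _ u)]
  refine ((JetBound.const 1).add hsum).mono ?_ ?_ ?_ <;>
    simp only [abs_one, Finset.card_univ, Fintype.card_fin] <;> exact le_of_eq (by ring)

lemma jetBound_mcfMatrix (hu : ∀ k, JetBound (dirDeriv (spaceDir k) u) p 1 H T) (i j : Fin n) :
    JetBound (fun q ↦ mcfMatrix (spatialGrad u q) i j) p 2 ((2 + 2 * n) * H)
      ((2 + 2 * n) * T + (2 + 10 * n + 8 * n ^ 2) * H ^ 2) := by
  have hδ : JetBound (fun _ : Spacetime n ↦ if i = j then (1 : ℝ) else 0) p 1 0 0 :=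
    (JetBound.const _).mono (by split_ifs <;> simp) le_rfl le_rfl
  rw [mcfMatrix_spatialGrad_eq]
  refine (hδ.add ((JetBound.const (-1)).mul
    (((hu i).mul (hu j)).mul ((jetBound_areaSq hu).inv one_le_areaSq)))).mono ?_ ?_ ?_ <;>
    simp only [abs_neg, abs_one] <;> exact le_of_eq (by ring)

lemma IsMCFAt.parabolicOp_dirDeriv_dirDeriv (hu : IsMCFAt u p) (v w : Spacetime n) :
    parabolicOp (mcfMatrix (spatialGrad u p)) (dirDeriv w (dirDeriv v u)) p =
      ((Matrix.of fun i j ↦ dirDeriv w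
          (dirDeriv v fun q ↦ mcfMatrix (spatialGrad u q) i j) p) * spatialHess u p).trace +
        ((Matrix.of fun i j ↦ dirDeriv v (fun q ↦ mcfMatrix (spatialGrad u q) i j) p) *
          spatialHess (dirDeriv w u) p).trace +
        ((Matrix.of fun i j ↦ dirDeriv w (fun q ↦ mcfMatrix (spatialGrad u q) i j) p) *
          spatialHess (dirDeriv v u) p).trace := by
  have hu₃ : ContDiffAt ℝ 3 u p := hu.contDiffAt.of_le (by norm_num)
  have hA (i j : Fin n) : ContDiffAt ℝ 2 (fun q ↦ mcfMatrix (spatialGrad u q) i j) p :=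
    contDiffAt_mcfMatrix hu₃ (by norm_num [two_add_one_eq_three]) i j
  have hH (i j : Fin n) : DifferentiableAt ℝ (fun q ↦ spatialHess u q i j) p :=
    differentiableAt_dirDeriv (contDiffAt_dirDeriv hu₃ (by norm_num [two_add_one_eq_three]))
  have hHess : (Matrix.of fun i j ↦ dirDeriv w (fun q ↦ spatialHess u q i j) p) =
      spatialHess (dirDeriv w u) p :=
    Matrix.ext fun i j ↦ (spatialHess_dirDeriv hu₃ i j).symm
  have hleft := dirDeriv_parabolicOp (v := w) (u := dirDeriv v u)
    (contDiffAt_dirDeriv hu.contDiffAt (by norm_num)) fun i j ↦ (hA i j).differentiableAt (by simp)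
  have hright := dirDeriv_trace_mul (v := w)
    (A := fun q ↦ Matrix.of fun i j ↦ dirDeriv v (fun q ↦ mcfMatrix (spatialGrad u q) i j) q)
    (fun i j ↦ differentiableAt_dirDeriv (hA i j)) hH
  rw [dirDeriv_congr (hu.eventually.mono fun q hq ↦ hq.parabolicOp_dirDeriv_eq_trace), hright,
    hHess] at hleft
  simp only [Matrix.of_apply] at hleft
  linear_combination -hleft

lemma abs_trace_mul_le {A B : Matrix (Fin n) (Fin n) ℝ} {a b : ℝ} (hA : ∀ i j, |A i j| ≤ a)
    (hB : ∀ i j, |B i j| ≤ b) : |(A * B).trace| ≤ n ^ 2 * (a * b) := by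
  have hentry (i j : Fin n) : |A i j * B j i| ≤ a * b := by
    rw [abs_mul]
    exact mul_le_mul (hA i j) (hB j i) (abs_nonneg _) ((abs_nonneg _).trans (hA i j))
  have hrow (i : Fin n) : |∑ j, A i j * B j i| ≤ n * (a * b) := by
    simpa using Finset.abs_sum_le_sum_abs _ _ |>.trans
      (Finset.sum_le_card_nsmul Finset.univ _ _ fun j _ ↦ hentry i j)
  simpa [Matrix.trace, Matrix.mul_apply, sq, mul_assoc] using Finset.abs_sum_le_sum_abs _ _ |>.trans
    (Finset.sum_le_card_nsmul Finset.univ _ _ fun i _ ↦ hrow i)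

lemma IsMCFAt.abs_parabolicOp_spatialHess_le (hu : IsMCFAt u p)
    (hjet : ∀ k, JetBound (dirDeriv (spaceDir k) u) p 1 H T) (k l : Fin n) :
    |parabolicOp (mcfMatrix (spatialGrad u p)) (dirDeriv (spaceDir l) (dirDeriv (spaceDir k) u)) p|
      ≤ n ^ 2 * (H * ((6 + 6 * n) * T + (2 + 10 * n + 8 * n ^ 2) * H ^ 2)) := by
  have hH (i j : Fin n) : |spatialHess u p i j| ≤ H := (hjet i).abs_spatialGrad_le j
  rw [hu.parabolicOp_dirDeriv_dirDeriv]
  refine ((abs_add_three _ _ _).trans (add_le_add_three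
    (abs_trace_mul_le (fun i j ↦ (jetBound_mcfMatrix hjet i j).abs_spatialHess_le k l) hH)
    (abs_trace_mul_le (fun i j ↦ (jetBound_mcfMatrix hjet i j).abs_spatialGrad_le k)
      (hjet l).abs_spatialHess_le)
    (abs_trace_mul_le (fun i j ↦ (jetBound_mcfMatrix hjet i j).abs_spatialGrad_le l)
      (hjet k).abs_spatialHess_le))).trans (le_of_eq ?_)
  ring

end JetBounds

section HessianEvolution

variable {n : ℕ} {u : Spacetime n → ℝ} {p : Spacetime n} {a : Matrix (Fin n) (Fin n) ℝ}

lemma hessSq_eq_sum :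
    hessSq u = ∑ k, ∑ l, dirDeriv (spaceDir l) (dirDeriv (spaceDir k) u) ^ 2 := by
  ext q
  simp [hessSq, spatialHess, Finset.sum_apply]

lemma contDiffAt_hessSq (hu : ContDiffAt ℝ 4 u p) : ContDiffAt ℝ 2 (hessSq u) p := by
  simp only [hessSq_eq_sum, Finset.sum_fn]
  exact .sum fun k _ ↦ .sum fun l _ ↦
    (contDiffAt_dirDeriv (contDiffAt_dirDeriv (k := 3) hu (by norm_num)) (by norm_num)).pow 2

/-- The good term `∑ aᵢⱼ ∂ᵢ∂ₖ∂ₗu ∂ⱼ∂ₖ∂ₗu` in the evolution equation of `|D²u|²`. -/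
noncomputable def hessGradForm (a : Matrix (Fin n) (Fin n) ℝ) (u : Spacetime n → ℝ)
    (p : Spacetime n) : ℝ :=
  ∑ k, ∑ l, gradForm a (dirDeriv (spaceDir l) (dirDeriv (spaceDir k) u))
    (dirDeriv (spaceDir l) (dirDeriv (spaceDir k) u)) p

lemma parabolicOp_hessSq (ha : a.PosSemidef) (hu : ContDiffAt ℝ 4 u p) :
    parabolicOp a (hessSq u) p = 2 * ∑ k, ∑ l, spatialHess u p k l *
        parabolicOp a (dirDeriv (spaceDir l) (dirDeriv (spaceDir k) u)) p -
      2 * hessGradForm a u p := by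
  have hD (k l : Fin n) : ContDiffAt ℝ 2 (dirDeriv (spaceDir l) (dirDeriv (spaceDir k) u)) p :=
    contDiffAt_dirDeriv (contDiffAt_dirDeriv (k := 3) hu (by norm_num)) (by norm_num)
  have hsq (k l : Fin n) :
      ContDiffAt ℝ 2 (dirDeriv (spaceDir l) (dirDeriv (spaceDir k) u) ^ 2) p := (hD k l).pow 2
  have hrow (k : Fin n) :
      ContDiffAt ℝ 2 (∑ l, dirDeriv (spaceDir l) (dirDeriv (spaceDir k) u) ^ 2) p := by
    rw [Finset.sum_fn]
    exact .sum fun l _ ↦ hsq k l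
  rw [hessSq_eq_sum, parabolicOp_sum fun k _ ↦ hrow k, hessGradForm, Finset.mul_sum, Finset.mul_sum,
    ← Finset.sum_sub_distrib]
  refine Finset.sum_congr rfl fun k _ ↦ ?_
  rw [parabolicOp_sum fun l _ ↦ hsq k l, Finset.mul_sum, Finset.mul_sum, ← Finset.sum_sub_distrib]
  refine Finset.sum_congr rfl fun l _ ↦ ?_
  rw [parabolicOp_sq ha (hD k l), spatialHess, Matrix.of_apply]
  ring

lemma sq_apply_le_dotProduct_self (x : Fin n → ℝ) (i : Fin n) : x i ^ 2 ≤ x ⬝ᵥ x := by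
  simpa [dotProduct, sq] using
    Finset.single_le_sum (fun j _ ↦ mul_self_nonneg (x j)) (Finset.mem_univ i)

lemma dotProduct_self_le_two_mul_mcfMatrix {P : Fin n → ℝ} (hP : P ⬝ᵥ P ≤ 1) (x : Fin n → ℝ) :
    x ⬝ᵥ x ≤ 2 * (mcfMatrix P).toBilin' x x := by
  have hle := inv_mul_dotProduct_le_mcfMatrix P x
  have hpos := one_add_dotProduct_self_pos P
  rw [inv_mul_le_iff₀ hpos] at hle
  have hnonneg : 0 ≤ (mcfMatrix P).toBilin' x x :=
    (posSemidef_toBilin' (mcfMatrix_posSemidef P)).isNonneg.nonneg x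
  nlinarith

lemma sq_spatialHess_le_hessSq (k l : Fin n) : spatialHess u p k l ^ 2 ≤ hessSq u p :=
  (Finset.single_le_sum (fun _ _ ↦ sq_nonneg _) (Finset.mem_univ l)).trans
    (Finset.single_le_sum (f := fun k ↦ ∑ l, spatialHess u p k l ^ 2)
      (fun _ _ ↦ Finset.sum_nonneg fun _ _ ↦ sq_nonneg _) (Finset.mem_univ k))

lemma gradForm_dirDeriv_dirDeriv_le_hessGradForm (ha : a.PosSemidef) (k l : Fin n) :
    gradForm a (dirDeriv (spaceDir l) (dirDeriv (spaceDir k) u))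
      (dirDeriv (spaceDir l) (dirDeriv (spaceDir k) u)) p ≤ hessGradForm a u p :=
  (Finset.single_le_sum (f := fun l ↦ gradForm a (dirDeriv (spaceDir l) (dirDeriv (spaceDir k) u))
      (dirDeriv (spaceDir l) (dirDeriv (spaceDir k) u)) p)
      (fun _ _ ↦ gradForm_self_nonneg ha) (Finset.mem_univ l)).trans
    (Finset.single_le_sum (f := fun k ↦ ∑ l, gradForm a
        (dirDeriv (spaceDir l) (dirDeriv (spaceDir k) u))
        (dirDeriv (spaceDir l) (dirDeriv (spaceDir k) u)) p)
      (fun _ _ ↦ Finset.sum_nonneg fun _ _ ↦ gradForm_self_nonneg ha) (Finset.mem_univ k))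

lemma jetBound_dirDeriv_of_gradSq_le_one (hu : ContDiffAt ℝ 3 u p)
    (hP : spatialGrad u p ⬝ᵥ spatialGrad u p ≤ 1) (k : Fin n) :
    JetBound (dirDeriv (spaceDir k) u) p 1 √(hessSq u p)
      √(2 * hessGradForm (mcfMatrix (spatialGrad u p)) u p) where
  contDiffAt := contDiffAt_dirDeriv hu (by norm_num [two_add_one_eq_three])
  abs_le := by
    rw [← Real.sqrt_one]
    exact Real.abs_le_sqrt ((sq_apply_le_dotProduct_self (spatialGrad u p) k).trans hP)
  abs_spatialGrad_le i := Real.abs_le_sqrt (sq_spatialHess_le_hessSq k i)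
  abs_spatialHess_le i j := Real.abs_le_sqrt <|
    (sq_apply_le_dotProduct_self (spatialGrad (dirDeriv (spaceDir i) (dirDeriv (spaceDir k) u)) p)
      j).trans <| (dotProduct_self_le_two_mul_mcfMatrix hP _).trans <|
      mul_le_mul_of_nonneg_left
        (gradForm_dirDeriv_dirDeriv_le_hessGradForm (mcfMatrix_posSemidef _) k i) two_pos.le

theorem exists_parabolicOp_hessSq_le (n : ℕ) : ∃ C : ℝ, 0 ≤ C ∧
    ∀ (u : Spacetime n → ℝ) (p : Spacetime n), IsMCFAt u p →
      spatialGrad u p ⬝ᵥ spatialGrad u p ≤ 1 →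
      parabolicOp (mcfMatrix (spatialGrad u p)) (hessSq u) p ≤
        C * hessSq u p ^ 2 - hessGradForm (mcfMatrix (spatialGrad u p)) u p := by
  set K : ℝ := 2 * n ^ 4 * (6 + 6 * n) with hK
  refine ⟨K ^ 2 + 2 * n ^ 4 * (2 + 10 * n + 8 * n ^ 2), by positivity, fun u p hu hP ↦ ?_⟩
  have ha := mcfMatrix_posSemidef (spatialGrad u p)
  set a := mcfMatrix (spatialGrad u p)
  have hS : 0 ≤ hessGradForm a u p :=
    Finset.sum_nonneg fun _ _ ↦ Finset.sum_nonneg fun _ _ ↦ gradForm_self_nonneg ha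
  have hjet := jetBound_dirDeriv_of_gradSq_le_one (hu.contDiffAt.of_le (by norm_num)) hP
  have hHsq := Real.sq_sqrt (hessSq_nonneg (u := u) (p := p))
  have hTsq := Real.sq_sqrt (mul_nonneg two_pos.le hS)
  set H := √(hessSq u p)
  set T := √(2 * hessGradForm a u p)
  set B := n ^ 2 * (H * ((6 + 6 * n) * T + (2 + 10 * n + 8 * n ^ 2) * H ^ 2)) with hB
  have hterm (k l : Fin n) : spatialHess u p k l *
      parabolicOp a (dirDeriv (spaceDir l) (dirDeriv (spaceDir k) u)) p ≤ H * B := by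
    refine (le_abs_self _).trans ((abs_mul _ _).trans_le ?_)
    exact mul_le_mul (Real.abs_le_sqrt (sq_spatialHess_le_hessSq k l))
      (hu.abs_parabolicOp_spatialHess_le hjet k l) (abs_nonneg _) (Real.sqrt_nonneg _)
  have hsum : ∑ k, ∑ l, spatialHess u p k l *
      parabolicOp a (dirDeriv (spaceDir l) (dirDeriv (spaceDir k) u)) p ≤ n ^ 2 * (H * B) := by
    refine (Finset.sum_le_sum fun k _ ↦ Finset.sum_le_sum fun l _ ↦ hterm k l).trans_eq ?_
    simp only [Finset.sum_const, Finset.card_univ, Fintype.card_fin, nsmul_eq_mul]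
    ring
  have hyoung : K * H ^ 2 * T ≤ K ^ 2 * H ^ 4 + T ^ 2 / 4 := by
    nlinarith [sq_nonneg (K * H ^ 2 - T / 2)]
  rw [parabolicOp_hessSq ha hu.contDiffAt, ← hHsq]
  calc
    _ ≤ 2 * (n ^ 2 * (H * B)) - T ^ 2 := by linarith
    _ = K * H ^ 2 * T + 2 * n ^ 4 * (2 + 10 * n + 8 * n ^ 2) * H ^ 4 - T ^ 2 := by
      rw [hB, hK]; ring
    _ ≤ _ := by linarith

end HessianEvolution

section Paraboloid

variable {n : ℕ} {p v : Spacetime n} {a : Matrix (Fin n) (Fin n) ℝ}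

/-- The function `|x - z|² + c (t - t₀)`, the building block of all barriers and cutoffs. For
`c = 2n + 1` it is a strict supersolution of the graphical mean curvature flow operator. -/
noncomputable def paraboloid (c : ℝ) (z : EuclideanSpace ℝ (Fin n)) (t₀ : ℝ) (p : Spacetime n) :
    ℝ :=
  ‖p.2 - z‖ ^ 2 + c * (p.1 - t₀)

variable {c : ℝ} {z : EuclideanSpace ℝ (Fin n)} {t₀ : ℝ}

lemma contDiff_paraboloid {m : ℕ∞ω} : ContDiff ℝ m (paraboloid c z t₀) := by
  unfold paraboloid
  exact ((contDiff_snd.sub contDiff_const).norm_sq ℝ).add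
    (contDiff_const.mul (contDiff_fst.sub contDiff_const))

lemma dirDeriv_paraboloid :
    dirDeriv v (paraboloid c z t₀) p = 2 * inner ℝ (p.2 - z) v.2 + c * v.1 := by
  have hx : HasFDerivAt (fun q : Spacetime n ↦ q.2 - z) (.snd ℝ _ _) p :=
    hasFDerivAt_snd.sub_const z
  have ht : HasFDerivAt (fun q : Spacetime n ↦ q.1 - t₀) (.fst ℝ _ _) p :=
    hasFDerivAt_fst.sub_const t₀
  refine (dirDeriv_eq_of_hasFDerivAt (v := v) (hx.norm_sq.add (ht.const_mul c))).trans ?_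
  simp [inner_sub_left]

lemma spatialGrad_paraboloid : spatialGrad (paraboloid c z t₀) p = fun i ↦ 2 * (p.2 - z) i := by
  ext i
  simp [spatialGrad, dirDeriv_paraboloid, spaceDir, EuclideanSpace.inner_single_right]

lemma spatialGrad_paraboloid_dotProduct_self :
    spatialGrad (paraboloid c z t₀) p ⬝ᵥ spatialGrad (paraboloid c z t₀) p =
      4 * ‖p.2 - z‖ ^ 2 := by
  rw [spatialGrad_paraboloid, EuclideanSpace.real_norm_sq_eq, Finset.mul_sum]
  exact Finset.sum_congr rfl fun i _ ↦ by ring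

lemma spatialHess_paraboloid : spatialHess (paraboloid c z t₀) p = (2 : ℝ) • 1 := by
  ext i j
  have hfst : dirDeriv (spaceDir i) (paraboloid c z t₀) =
      fun q : Spacetime n ↦ 2 * (q.2 i - z i) :=
    funext fun q ↦ congrFun spatialGrad_paraboloid i
  have hd : HasFDerivAt (fun q : Spacetime n ↦ 2 * (q.2 i - z i))
      ((2 : ℝ) • (EuclideanSpace.proj i ∘L .snd ℝ _ _ : Spacetime n →L[ℝ] ℝ)) p :=
    ((EuclideanSpace.proj i ∘L .snd ℝ _ _ : Spacetime n →L[ℝ] ℝ).hasFDerivAt.sub_const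
      (z i)).const_mul 2
  rw [spatialHess, Matrix.of_apply, hfst, dirDeriv_eq_of_hasFDerivAt hd]
  simp [spaceDir, Matrix.one_apply]

lemma parabolicOp_paraboloid : parabolicOp a (paraboloid c z t₀) p = c - 2 * a.trace := by
  rw [parabolicOp, dirDeriv_paraboloid, spatialHess_paraboloid]
  simp [timeDir]

end Paraboloid

section FlowOfFamily

variable {n : ℕ} {f : ℝ → EuclideanSpace ℝ (Fin n) → ℝ} {t₁ t₂ t : ℝ}
  {U : Set (EuclideanSpace ℝ (Fin n))} {x : EuclideanSpace ℝ (Fin n)}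

lemma spatialGrad_uncurry_apply (hf : DifferentiableAt ℝ (f t) x) (i : Fin n) :
    spatialGrad (Function.uncurry f) (t, x) i = pd (f t) x i := by
  simp [spatialGrad, dirDeriv, lineDeriv, spaceDir, pd, ← hf.lineDeriv_eq_fderiv]

lemma areaSq_uncurry (hf : DifferentiableAt ℝ (f t) x) :
    areaSq (Function.uncurry f) (t, x) = 1 + gradNormSq (f t) x := by
  simp [areaSq, gradNormSq, dotProduct, spatialGrad_uncurry_apply hf, sq]

lemma spatialHess_uncurry_apply (hf : ContDiffAt ℝ 2 (Function.uncurry f) (t, x)) (i j : Fin n) :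
    spatialHess (Function.uncurry f) (t, x) j i = pd2 (f t) x i j := by
  have hslice : ContDiffAt ℝ 2 (f t) x :=
    hf.comp x (contDiffAt_const.prodMk contDiffAt_id : ContDiffAt ℝ 2 (fun y ↦ (t, y)) x)
  have hev : (fun y ↦ pd (f t) y j) =ᶠ[𝓝 x]
      fun y ↦ dirDeriv (spaceDir j) (Function.uncurry f) (t, y) := by
    filter_upwards [hslice.eventually (by simp)] with y hy
    exact (spatialGrad_uncurry_apply (hy.differentiableAt (by simp)) j).symm
  have hd : DifferentiableAt ℝ (fun y ↦ dirDeriv (spaceDir j) (Function.uncurry f) (t, y)) x :=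
    DifferentiableAt.comp x (differentiableAt_dirDeriv hf)
      ((differentiableAt_const t).prodMk differentiableAt_id)
  rw [pd2, hev.fderiv_eq]
  exact spatialGrad_uncurry_apply (f := fun s y ↦ dirDeriv (spaceDir j) (Function.uncurry f) (s, y))
    hd i

lemma hessNorm_eq_sqrt_hessSq (hf : ContDiffAt ℝ 2 (Function.uncurry f) (t, x)) :
    hessNorm (f t) x = √(hessSq (Function.uncurry f) (t, x)) := by
  rw [hessNorm, hessSq, Finset.sum_comm]
  simp only [spatialHess_uncurry_apply hf]

lemma parabolicOp_uncurry (hf : ContDiffAt ℝ 2 (Function.uncurry f) (t, x)) :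
    parabolicOp (mcfMatrix (spatialGrad (Function.uncurry f) (t, x))) (Function.uncurry f) (t, x) =
      deriv (fun s ↦ f s x) t - mcfRHS (f t) x := by
  have hslice : DifferentiableAt ℝ (f t) x :=
    (hf.comp x (contDiffAt_const.prodMk contDiffAt_id :
      ContDiffAt ℝ 2 (fun y ↦ (t, y)) x)).differentiableAt (by simp)
  have htime : HasDerivAt (fun s ↦ f s x) (dirDeriv timeDir (Function.uncurry f) (t, x)) t := by
    rw [dirDeriv_eq_fderiv (hf.differentiableAt (by simp))]
    exact (hf.differentiableAt (by simp)).hasFDerivAt.comp_hasDerivAt t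
      ((hasDerivAt_id t).prodMk (hasDerivAt_const t x))
  have hQ := areaSq_uncurry hslice
  rw [areaSq] at hQ
  simp only [parabolicOp, htime.deriv, mcfRHS, Matrix.trace, Matrix.diag_apply, Matrix.mul_apply,
    mcfMatrix_apply, ← div_eq_mul_inv, hQ, spatialGrad_uncurry_apply hslice,
    spatialHess_uncurry_apply hf]

namespace IsGMCF

variable (hf : IsGMCF (Ico t₁ t₂) U f)
include hf

lemma hasFDerivAt_slice (hU : IsOpen U) (ht : t ∈ Ico t₁ t₂) (hx : x ∈ U) :
    HasFDerivAt (f t) (fderivWithin ℝ (Function.uncurry f) (Ico t₁ t₂ ×ˢ U) (t, x) ∘L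
      .inr ℝ ℝ (EuclideanSpace ℝ (Fin n))) x :=
  ((hf.1.differentiableOn (by simp) (t, x) ⟨ht, hx⟩).hasFDerivWithinAt.comp x
    (hasFDerivAt_prodMk_right t x).hasFDerivWithinAt fun _ hy ↦ ⟨ht, hy⟩).hasFDerivAt
      (hU.mem_nhds hx)

lemma isMCFAt (hU : IsOpen U) {p : Spacetime n} (hp : p ∈ Ioo t₁ t₂ ×ˢ U) :
    IsMCFAt (Function.uncurry f) p := by
  have hsmooth : ∀ q ∈ Ioo t₁ t₂ ×ˢ U, ContDiffAt ℝ 4 (Function.uncurry f) q := fun q hq ↦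
    ((hf.1.of_le (mod_cast le_top : ((4 : ℕ∞) : ℕ∞ω) ≤ (⊤ : ℕ∞))).mono
      (prod_mono Ioo_subset_Ico_self Subset.rfl)).contDiffAt ((isOpen_Ioo.prod hU).mem_nhds hq)
  refine ⟨hsmooth p hp, ?_⟩
  filter_upwards [(isOpen_Ioo.prod hU).mem_nhds hp] with q hq
  rw [parabolicOp_uncurry ((hsmooth q hq).of_le (by norm_num)),
    hf.2 q.1 (Ioo_subset_Ico_self hq.1) q.2 hq.2, sub_self]

lemma continuousOn_areaSq (hU : IsOpen U) :
    ContinuousOn (areaSq (Function.uncurry f)) (Ico t₁ t₂ ×ˢ U) := by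
  have hD := hf.1.continuousOn_fderivWithin
    ((uniqueDiffOn_Ico t₁ t₂).prod hU.uniqueDiffOn) (by simp)
  have hcont : ContinuousOn (fun p ↦ 1 + ∑ i,
      fderivWithin ℝ (Function.uncurry f) (Ico t₁ t₂ ×ˢ U) p (spaceDir i) ^ 2) (Ico t₁ t₂ ×ˢ U) :=
    continuousOn_const.add (continuousOn_finsetSum _ fun _ _ ↦
      (hD.clm_apply continuousOn_const).pow 2)
  refine hcont.congr fun p hp ↦ ?_
  have hslice := hf.hasFDerivAt_slice hU hp.1 hp.2
  refine (areaSq_uncurry hslice.differentiableAt).trans ?_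
  simp [gradNormSq, pd, hslice.fderiv, spaceDir]

end IsGMCF

end FlowOfFamily

section Estimates

variable {n : ℕ} {u F : Spacetime n → ℝ} {p : Spacetime n} {z : EuclideanSpace ℝ (Fin n)}
  {a b t r m κ Θ : ℝ}

lemma parabolicOp_paraboloid_pos {A : Matrix (Fin n) (Fin n) ℝ} (hA : A.trace ≤ n) {t₀ : ℝ} :
    0 < parabolicOp A (paraboloid (2 * n + 1) z t₀) p := by
  rw [parabolicOp_paraboloid]
  linarith

lemma norm_sub_sq_le_paraboloid (ht : a ≤ t) (x : EuclideanSpace ℝ (Fin n)) :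
    ‖x - z‖ ^ 2 ≤ paraboloid (2 * n + 1) z a (t, x) :=
  le_add_of_nonneg_right (mul_nonneg (by positivity) (sub_nonneg.2 ht))

theorem lt_add_of_parabolicOp_nonpos {A : Spacetime n → Matrix (Fin n) (Fin n) ℝ}
    (hr : 0 ≤ r) (hκ : 0 < κ) (hFc : ContinuousOn F (Icc a b ×ˢ closedBall z r))
    (hF : ∀ p ∈ Ioc a b ×ˢ ball z r, ContDiffAt ℝ 2 F p)
    (hA : ∀ p ∈ Ioc a b ×ˢ ball z r, (A p).PosSemidef)
    (htr : ∀ p ∈ Ioc a b ×ˢ ball z r, (A p).trace ≤ n)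
    (hop : ∀ p ∈ Ioc a b ×ˢ ball z r, parabolicOp (A p) F p ≤ 0)
    (hinit : ∀ x ∈ closedBall z r, F (a, x) < m)
    (hlat : ∀ t ∈ Icc a b, ∀ x ∈ sphere z r, F (t, x) < m + κ * r ^ 2) :
    ∀ t ∈ Icc a b, F (t, z) < m + κ * ((2 * n + 1) * (t - a)) := by
  set B : Spacetime n → ℝ := paraboloid (2 * n + 1) z a
  have hB : ContDiff ℝ 2 B := contDiff_paraboloid
  have hκB {p : Spacetime n} : ContDiffAt ℝ 2 (-κ • B) p := (hB.const_smul (-κ)).contDiffAt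
  have hBnonneg {t : ℝ} (ht : t ∈ Icc a b) (x : EuclideanSpace ℝ (Fin n)) :
      κ * ‖x - z‖ ^ 2 ≤ κ * B (t, x) :=
    mul_le_mul_of_nonneg_left (norm_sub_sq_le_paraboloid ht.1 x) hκ.le
  intro t ht
  have hlt := lt_of_parabolicOp_neg (F := F + (-κ) • B) (A := A) (θ := m)
    (hFc.add (hB.continuous.const_smul (-κ)).continuousOn)
    (fun p hp ↦ (hF p hp).add hκB) hA ?_ ?_ ?_ (t, z)
    ⟨ht, mem_closedBall_self hr⟩
  · simpa [B, paraboloid, ← sub_eq_add_neg, sub_lt_iff_lt_add] using hlt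
  · intro x hx
    have := (by positivity : 0 ≤ κ * ‖x - z‖ ^ 2).trans (hBnonneg ⟨le_rfl, ht.1.trans ht.2⟩ x)
    simpa using (hinit x hx).trans_le (le_add_of_nonneg_right this)
  · intro s hs x hx
    have := hBnonneg hs x
    rw [mem_sphere_iff_norm.1 hx] at this
    simpa using (hlat s hs x hx).trans_le (add_le_add_right this m)
  · intro p hp _ _
    rw [parabolicOp_add (hF p hp) hκB,
      parabolicOp_const_smul _ hB.contDiffAt]
    have := mul_pos hκ (parabolicOp_paraboloid_pos (z := z) (p := p) (t₀ := a) (htr p hp))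
    linarith [hop p hp]

theorem abs_lt_add_of_isMCFAt (hr : 0 ≤ r) (hκ : 0 < κ)
    (huc : ContinuousOn u (Icc a b ×ˢ closedBall z r))
    (hu : ∀ p ∈ Ioc a b ×ˢ ball z r, IsMCFAt u p) (hinit : ∀ x ∈ closedBall z r, |u (a, x)| < m)
    (hlat : ∀ t ∈ Icc a b, ∀ x ∈ sphere z r, |u (t, x)| < m + κ * r ^ 2) :
    ∀ t ∈ Icc a b, |u (t, z)| < m + κ * ((2 * n + 1) * (t - a)) := by
  have hu₂ : ∀ p ∈ Ioc a b ×ˢ ball z r, ContDiffAt ℝ 2 u p := fun p hp ↦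
    (hu p hp).contDiffAt.of_le (by norm_num)
  have hbound (σ : ℝ) (hσ : ∀ y : ℝ, σ * y ≤ |y|) :=
    lt_add_of_parabolicOp_nonpos (F := σ • u) (A := fun p ↦ mcfMatrix (spatialGrad u p)) hr hκ
      (huc.const_smul σ) (fun p hp ↦ contDiffAt_const.mul (hu₂ p hp))
      (fun p _ ↦ mcfMatrix_posSemidef _) (fun p _ ↦ mcfMatrix_trace_le _)
      (fun p hp ↦ by rw [parabolicOp_const_smul σ (hu₂ p hp), (hu p hp).parabolicOp_eq_zero,
        mul_zero])
      (fun x hx ↦ (hσ _).trans_lt (hinit x hx)) (fun t ht x hx ↦ (hσ _).trans_lt (hlat t ht x hx))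
  refine fun t ht ↦ abs_lt.2 ⟨?_, ?_⟩
  · have := hbound (-1) (fun y ↦ by simpa using neg_le_abs y) t ht
    rw [Pi.smul_apply, smul_eq_mul] at this
    linarith
  · simpa using hbound 1 (fun y ↦ by simpa using le_abs_self y) t ht

lemma spatialGrad_eq_smul_of_mul_cube {Q η : Spacetime n → ℝ} (hQ : DifferentiableAt ℝ Q p)
    (hη : DifferentiableAt ℝ η p) (h₀ : η p ≠ 0) (hcrit : spatialGrad (Q * η ^ 3) p = 0) :
    spatialGrad Q p = (-3 * Q p / η p) • spatialGrad η p := by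
  ext i
  have hi := congrFun hcrit i
  rw [spatialGrad_mul hQ (hη.pow 3), spatialGrad_cube hη] at hi
  simp only [Pi.add_apply, Pi.smul_apply, Pi.pow_apply, Pi.zero_apply, smul_eq_mul] at hi ⊢
  field_simp
  refine mul_left_cancel₀ (pow_ne_zero 2 h₀) ?_
  linear_combination hi

-- The exponent three is large enough for the hypothesis on `L Q` to absorb all the gradient terms
-- at a critical point.
lemma parabolicOp_mul_cube_neg {A : Matrix (Fin n) (Fin n) ℝ} (hA : A.PosSemidef)
    {Q η : Spacetime n → ℝ} (hQ : ContDiffAt ℝ 2 Q p) (hη : ContDiffAt ℝ 2 η p)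
    (hQpos : 0 < Q p) (hηpos : 0 < η p)
    (hLQ : Q p * parabolicOp A Q p ≤ -(3 / 2) * gradForm A Q Q p) (hLη : parabolicOp A η p < 0)
    (hcrit : spatialGrad (Q * η ^ 3) p = 0) : parabolicOp A (Q * η ^ 3) p < 0 := by
  have hη₃ : ContDiffAt ℝ 2 (η ^ 3) p := hη.pow 3
  have hηd : DifferentiableAt ℝ η p := hη.differentiableAt (by simp)
  set c := -3 * Q p / η p
  have hc : c * η p = -3 * Q p := div_mul_cancel₀ _ hηpos.ne'
  have hgradQ : spatialGrad Q p = c • spatialGrad η p :=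
    spatialGrad_eq_smul_of_mul_cube (hQ.differentiableAt (by simp)) hηd hηpos.ne' hcrit
  have hG : 0 ≤ gradForm A η η p := gradForm_self_nonneg hA
  have hQη : gradForm A Q (η ^ 3) p = c * (3 * η p ^ 2) * gradForm A η η p := by
    simp only [gradForm, spatialGrad_cube hηd, hgradQ, map_smul, LinearMap.smul_apply, smul_eq_mul]
    ring
  have hQQ : gradForm A Q Q p = c ^ 2 * gradForm A η η p := by
    simp only [gradForm, hgradQ, map_smul, LinearMap.smul_apply, smul_eq_mul]
    ring
  rw [hQQ] at hLQ
  refine neg_of_mul_neg_right (a := Q p) ?_ hQpos.le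
  calc Q p * parabolicOp A (Q * η ^ 3) p
      = 3 * Q p ^ 2 * η p ^ 2 * parabolicOp A η p + η p ^ 3 * (Q p * parabolicOp A Q p) +
          12 * Q p ^ 2 * η p * gradForm A η η p := by
        rw [parabolicOp_mul hA hQ hη₃, parabolicOp_cube hA hη, hQη, Pi.pow_apply]
        linear_combination (-6) * Q p * η p * gradForm A η η p * hc
    _ ≤ 3 * Q p ^ 2 * η p ^ 2 * parabolicOp A η p +
          η p ^ 3 * (-(3 / 2) * (c ^ 2 * gradForm A η η p)) +
          12 * Q p ^ 2 * η p * gradForm A η η p := by gcongr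
    _ = 3 * Q p ^ 2 * η p ^ 2 * parabolicOp A η p -
          3 / 2 * Q p ^ 2 * η p * gradForm A η η p := by
        linear_combination (-(3 / 2)) * η p * gradForm A η η p * (c * η p - 3 * Q p) * hc
    _ < 0 := by
        have : 3 * Q p ^ 2 * η p ^ 2 * parabolicOp A η p < 0 :=
          mul_neg_of_pos_of_neg (by positivity) hLη
        have : 0 ≤ 3 / 2 * Q p ^ 2 * η p * gradForm A η η p := by positivity
        linarith

/-- The cutoff `r² - |x - z|² - (2n + 1)(t - a)`, a strict subsolution whose support shrinks as `t`
increases; it localises the gradient bound to `B(z, r)`. -/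
noncomputable def shrinkingCutoff (z : EuclideanSpace ℝ (Fin n)) (r a : ℝ) : Spacetime n → ℝ :=
  (fun _ ↦ r ^ 2) + (-1 : ℝ) • paraboloid (2 * n + 1) z a

lemma shrinkingCutoff_apply :
    shrinkingCutoff z r a p = r ^ 2 - paraboloid (2 * n + 1) z a p := by
  simp [shrinkingCutoff, sub_eq_add_neg]

lemma contDiff_shrinkingCutoff {m : ℕ∞ω} : ContDiff ℝ m (shrinkingCutoff z r a) :=
  contDiff_const.add (contDiff_paraboloid.const_smul (-1 : ℝ))

lemma parabolicOp_shrinkingCutoff_neg {A : Matrix (Fin n) (Fin n) ℝ} (hA : A.trace ≤ n) :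
    parabolicOp A (shrinkingCutoff z r a) p < 0 := by
  have hB : ContDiffAt ℝ 2 ((-1 : ℝ) • paraboloid (2 * n + 1) z a) p :=
    (contDiff_paraboloid.const_smul (-1 : ℝ)).contDiffAt
  rw [shrinkingCutoff, parabolicOp_add contDiffAt_const hB, parabolicOp_const,
    parabolicOp_const_smul _ contDiff_paraboloid.contDiffAt]
  linarith [parabolicOp_paraboloid_pos (p := p) (z := z) (t₀ := a) hA]

lemma shrinkingCutoff_initial_le (x : EuclideanSpace ℝ (Fin n)) :
    shrinkingCutoff z r a (a, x) ≤ r ^ 2 := by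
  simp [shrinkingCutoff_apply, paraboloid]

lemma shrinkingCutoff_nonpos_of_mem_sphere (ht : a ≤ t) {x : EuclideanSpace ℝ (Fin n)}
    (hx : x ∈ sphere z r) : shrinkingCutoff z r a (t, x) ≤ 0 := by
  have := norm_sub_sq_le_paraboloid (z := z) ht x
  rw [mem_sphere_iff_norm.1 hx] at this
  rwa [shrinkingCutoff_apply, sub_nonpos]

theorem areaSq_mul_shrinkingCutoff_cube_lt (hr : 0 < r)
    (hQc : ContinuousOn (areaSq u) (Icc a b ×ˢ closedBall z r))
    (hu : ∀ p ∈ Ioc a b ×ˢ ball z r, IsMCFAt u p)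
    (hinit : ∀ x ∈ closedBall z r, areaSq u (a, x) < Θ) :
    ∀ p ∈ Icc a b ×ˢ closedBall z r,
      areaSq u p * shrinkingCutoff z r a p ^ 3 < Θ * (r ^ 2) ^ 3 := by
  have hη : ContDiff ℝ 2 (shrinkingCutoff z r a) := contDiff_shrinkingCutoff
  have hΘ : 0 < Θ := areaSq_pos.trans (hinit z (mem_closedBall_self hr.le))
  have hlevel : 0 < Θ * (r ^ 2) ^ 3 := by positivity
  have hnonpos {p : Spacetime n} (hp : shrinkingCutoff z r a p ≤ 0) :
      areaSq u p * shrinkingCutoff z r a p ^ 3 < Θ * (r ^ 2) ^ 3 :=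
    (mul_nonpos_of_nonneg_of_nonpos areaSq_pos.le (Odd.pow_nonpos (by decide) hp)).trans_lt hlevel
  have hQC : ∀ p ∈ Ioc a b ×ˢ ball z r, ContDiffAt ℝ 2 (areaSq u) p := fun p hp ↦
    contDiffAt_areaSq (hu p hp).contDiffAt (by norm_num)
  refine lt_of_parabolicOp_neg (F := areaSq u * shrinkingCutoff z r a ^ 3)
    (A := fun p ↦ mcfMatrix (spatialGrad u p)) (hQc.mul (hη.pow 3).continuous.continuousOn)
    (fun p hp ↦ (hQC p hp).mul (hη.pow 3).contDiffAt) (fun p _ ↦ mcfMatrix_posSemidef _) ?_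
    (fun t ht x hx ↦ hnonpos (shrinkingCutoff_nonpos_of_mem_sphere ht.1 hx)) ?_
  · intro x hx
    have hηx : shrinkingCutoff z r a (a, x) ^ 3 ≤ (r ^ 2) ^ 3 :=
      (Odd.strictMono_pow (by decide : Odd 3)).monotone (shrinkingCutoff_initial_le x)
    exact (mul_le_mul_of_nonneg_left hηx areaSq_pos.le).trans_lt
      (mul_lt_mul_of_pos_right (hinit x hx) (by positivity))
  · intro p hp hθ hcrit
    have hηpos : 0 < shrinkingCutoff z r a p := not_le.1 fun hη₀ ↦ (hnonpos hη₀).ne hθ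
    exact parabolicOp_mul_cube_neg (mcfMatrix_posSemidef _) (hQC p hp) hη.contDiffAt areaSq_pos
      hηpos (hu p hp).areaSq_mul_parabolicOp_areaSq_le
      (parabolicOp_shrinkingCutoff_neg (mcfMatrix_trace_le _)) hcrit

end Estimates

section InteriorEstimates

variable {n : ℕ} {u : Spacetime n → ℝ} {p : Spacetime n} {z : EuclideanSpace ℝ (Fin n)}
  {a b r M V : ℝ}

lemma IsMCFAt.parabolicOp_time_mul_areaSq_add_sq_nonpos (hu : IsMCFAt u p) {c : ℝ} (hc : c ≤ p.1)
    (hQ : areaSq u p ≤ V) :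
    parabolicOp (mcfMatrix (spatialGrad u p))
      ((fun q ↦ q.1 - c) * (areaSq u + fun _ ↦ -1) + (V / 2) • u ^ 2) p ≤ 0 := by
  set A := mcfMatrix (spatialGrad u p)
  have hA : A.PosSemidef := mcfMatrix_posSemidef _
  have hu₂ : ContDiffAt ℝ 2 u p := hu.contDiffAt.of_le (by norm_num)
  have husq : ContDiffAt ℝ 2 (u ^ 2) p := hu₂.pow 2
  have hVsq : ContDiffAt ℝ 2 ((V / 2) • u ^ 2) p := contDiffAt_const.mul husq
  have hQC : ContDiffAt ℝ 2 (areaSq u) p := contDiffAt_areaSq hu.contDiffAt (by norm_num)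
  have hQ₁ : ContDiffAt ℝ 2 (areaSq u + fun _ ↦ -1) p := hQC.add contDiffAt_const
  have htQ : ContDiffAt ℝ 2 ((fun q : Spacetime n ↦ q.1 - c) * (areaSq u + fun _ ↦ -1)) p :=
    (contDiffAt_fst.sub contDiffAt_const).mul hQ₁
  have hLQ : parabolicOp A (areaSq u) p ≤ 0 := by
    have := mul_nonneg (inv_nonneg.2 (areaSq_pos (u := u) (p := p)).le)
      (hessSq_nonneg (u := u) (p := p))
    linarith [hu.parabolicOp_areaSq_le]
  have huu : gradForm A u u p = (areaSq u p)⁻¹ * (areaSq u p - 1) := by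
    rw [gradForm, mcfMatrix_toBilin'_grad, areaSq, add_sub_cancel_left]
  have hV : areaSq u p - 1 ≤ V * gradForm A u u p := by
    rw [huu, ← mul_assoc]
    refine le_mul_of_one_le_left (sub_nonneg.2 one_le_areaSq) ?_
    rwa [← div_eq_mul_inv, one_le_div areaSq_pos]
  rw [parabolicOp_add htQ hVsq, parabolicOp_time_mul hA c hQ₁, parabolicOp_add hQC contDiffAt_const,
    parabolicOp_const, parabolicOp_const_smul _ husq, parabolicOp_sq hA hu₂,
    hu.parabolicOp_eq_zero, Pi.add_apply]
  have := mul_nonpos_of_nonneg_of_nonpos (sub_nonneg.2 hc) hLQ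
  linarith

theorem mul_areaSq_sub_one_lt (hr : 0 < r) (hab : a < b) (hM : 0 < M)
    (huc : ContinuousOn u (Icc a b ×ˢ closedBall z r))
    (hQc : ContinuousOn (areaSq u) (Icc a b ×ˢ closedBall z r))
    (hu : ∀ p ∈ Ioc a b ×ˢ ball z r, IsMCFAt u p)
    (hbound : ∀ p ∈ Icc a b ×ˢ closedBall z r, |u p| ≤ M ∧ areaSq u p ≤ V) :
    ∀ t ∈ Icc a b, (t - a) * (areaSq u (t, z) - 1) <
      V * M ^ 2 + V * (b - a) / r ^ 2 * ((2 * n + 1) * (t - a)) := by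
  have hV : 0 < V := areaSq_pos.trans_le
    (hbound (a, z) ⟨left_mem_Icc.2 hab.le, mem_closedBall_self hr.le⟩).2
  have hsq : ∀ p ∈ Icc a b ×ˢ closedBall z r, V / 2 * u p ^ 2 < V * M ^ 2 := fun p hp ↦ by
    have := sq_le_sq.2 ((hbound p hp).1.trans (le_abs_self M))
    have := mul_le_mul_of_nonneg_left this (half_pos hV).le
    have : 0 < V * M ^ 2 := by positivity
    linarith
  intro t ht
  have hlt := lt_add_of_parabolicOp_nonpos
    (F := (fun q ↦ q.1 - a) * (areaSq u + fun _ ↦ -1) + (V / 2) • u ^ 2)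
    (A := fun p ↦ mcfMatrix (spatialGrad u p)) (m := V * M ^ 2) (κ := V * (b - a) / r ^ 2) hr.le
    (div_pos (mul_pos hV (sub_pos.2 hab)) (by positivity))
    (((by fun_prop : Continuous fun q : Spacetime n ↦ q.1 - a).continuousOn.mul
      (hQc.add continuousOn_const)).add (continuousOn_const.mul (huc.pow 2)))
    (fun p hp ↦ ((contDiffAt_fst.sub contDiffAt_const).mul
      ((contDiffAt_areaSq (hu p hp).contDiffAt (by norm_num)).add contDiffAt_const)).add
        (contDiffAt_const.mul (((hu p hp).contDiffAt.of_le (by norm_num)).pow 2)))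
    (fun p _ ↦ mcfMatrix_posSemidef _) (fun p _ ↦ mcfMatrix_trace_le _)
    (fun p hp ↦ (hu p hp).parabolicOp_time_mul_areaSq_add_sq_nonpos hp.1.1.le
      (hbound p ⟨Ioc_subset_Icc_self hp.1, ball_subset_closedBall hp.2⟩).2) ?_ ?_ t ht
  · have : 0 ≤ V / 2 * u (t, z) ^ 2 := by positivity
    simp only [Pi.add_apply, Pi.mul_apply, Pi.smul_apply, Pi.pow_apply, smul_eq_mul] at hlt
    linarith
  · intro x hx
    simpa using hsq (a, x) ⟨left_mem_Icc.2 hab.le, hx⟩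
  · intro s hs x hx
    have hmem : ((s, x) : Spacetime n) ∈ Icc a b ×ˢ closedBall z r :=
      ⟨hs, sphere_subset_closedBall hx⟩
    have : (s - a) * (areaSq u (s, x) - 1) ≤ (b - a) * V :=
      mul_le_mul (by linarith [hs.2]) (by linarith [(hbound _ hmem).2])
        (sub_nonneg.2 one_le_areaSq) (sub_pos.2 hab).le
    rw [div_mul_cancel₀ _ (by positivity)]
    simp only [Pi.add_apply, Pi.mul_apply, Pi.smul_apply, Pi.pow_apply, smul_eq_mul]
    linarith [hsq _ hmem]

lemma gradForm_hessSq {A : Matrix (Fin n) (Fin n) ℝ} {η : Spacetime n → ℝ}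
    (hu : ContDiffAt ℝ 4 u p) : gradForm A η (hessSq u) p = 2 * ∑ k, ∑ l, spatialHess u p k l *
      gradForm A η (dirDeriv (spaceDir l) (dirDeriv (spaceDir k) u)) p := by
  have hD (k l : Fin n) :
      DifferentiableAt ℝ (dirDeriv (spaceDir l) (dirDeriv (spaceDir k) u)) p :=
    differentiableAt_dirDeriv (contDiffAt_dirDeriv hu (by norm_num))
  have hgrad : spatialGrad (hessSq u) p = (2 : ℝ) • ∑ k, ∑ l, spatialHess u p k l •
      spatialGrad (dirDeriv (spaceDir l) (dirDeriv (spaceDir k) u)) p := by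
    simp only [hessSq_eq_sum, Finset.smul_sum, smul_smul]
    rw [spatialGrad_sum fun k _ ↦ .sum fun l _ ↦ (hD k l).pow 2]
    refine Finset.sum_congr rfl fun k _ ↦ ?_
    rw [spatialGrad_sum fun l _ ↦ (hD k l).pow 2]
    exact Finset.sum_congr rfl fun l _ ↦ spatialGrad_sq (hD k l)
  rw [gradForm, hgrad]
  simp only [map_smul, map_sum, smul_eq_mul, gradForm]

lemma parabolicOp_sq_mul_hessSq_le {A : Matrix (Fin n) (Fin n) ℝ} (hA : A.PosSemidef)
    {η : Spacetime n → ℝ} (hη : ContDiffAt ℝ 2 η p) (hu : ContDiffAt ℝ 4 u p) :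
    parabolicOp A (η ^ 2 * hessSq u) p ≤
      η p ^ 2 * (parabolicOp A (hessSq u) p + hessGradForm A u p) +
        (2 * η p * parabolicOp A η p + 14 * gradForm A η η p) * hessSq u p := by
  have hη₂ : ContDiffAt ℝ 2 (η ^ 2) p := hη.pow 2
  have hcross : -(4 * η p * gradForm A η (hessSq u) p) ≤
      16 * gradForm A η η p * hessSq u p + η p ^ 2 * hessGradForm A u p := by
    rw [gradForm_hessSq hu, hessSq, hessGradForm]
    simp only [Finset.mul_sum, ← Finset.sum_neg_distrib, ← Finset.sum_add_distrib]
    refine Finset.sum_le_sum fun k _ ↦ Finset.sum_le_sum fun l _ ↦ ?_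
    have := bilinForm_two_mul_le (posSemidef_toBilin' hA)
      ((-4 * spatialHess u p k l) • spatialGrad η p)
      (η p • spatialGrad (dirDeriv (spaceDir l) (dirDeriv (spaceDir k) u)) p)
    simp only [map_smul, LinearMap.smul_apply, smul_eq_mul] at this
    simp only [gradForm]
    linarith
  rw [parabolicOp_mul hA hη₂ (contDiffAt_hessSq hu), parabolicOp_sq hA hη,
    gradForm_sq_left (hη.differentiableAt (by simp)), Pi.pow_apply]
  linarith

end InteriorEstimates

section HessianEstimate

variable {n : ℕ} {u η : Spacetime n → ℝ} {p : Spacetime n} {z : EuclideanSpace ℝ (Fin n)}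
  {C K N c r : ℝ}

/-- Bernstein's auxiliary function `(t - c) η² |D²u|² + N |Du|²`; the second term absorbs the
growth of the first under the heat operator. -/
noncomputable def bernsteinFun (c : ℝ) (η : Spacetime n → ℝ) (N : ℝ) (u : Spacetime n → ℝ) :
    Spacetime n → ℝ :=
  (fun q ↦ q.1 - c) * (η ^ 2 * hessSq u) + N • (areaSq u + fun _ ↦ -1)

lemma bernsteinFun_apply : bernsteinFun c η N u p =
    (p.1 - c) * (η p ^ 2 * hessSq u p) + N * (areaSq u p - 1) := by
  simp [bernsteinFun, sub_eq_add_neg, mul_add]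

lemma contDiffAt_bernsteinFun (hη : ContDiffAt ℝ 2 η p) (hu : ContDiffAt ℝ 4 u p) :
    ContDiffAt ℝ 2 (bernsteinFun c η N u) p :=
  ((contDiffAt_fst.sub contDiffAt_const).mul ((hη.pow 2).mul (contDiffAt_hessSq hu))).add
    (contDiffAt_const.mul ((contDiffAt_areaSq hu (by norm_num)).add contDiffAt_const))

lemma IsMCFAt.parabolicOp_bernsteinFun_neg (hu : IsMCFAt u p)
    (hC : parabolicOp (mcfMatrix (spatialGrad u p)) (hessSq u) p ≤
      C * hessSq u p ^ 2 - hessGradForm (mcfMatrix (spatialGrad u p)) u p) (hC₀ : 0 ≤ C)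
    (hη : ContDiffAt ℝ 2 η p) (hη₁ : η p ^ 2 ≤ 1)
    (hK : 2 * η p * parabolicOp (mcfMatrix (spatialGrad u p)) η p +
      14 * gradForm (mcfMatrix (spatialGrad u p)) η η p ≤ K)
    (hc : c ≤ p.1) (hN : 1 + C + (p.1 - c) * K < N) (hN₀ : 0 ≤ N) (hQ : areaSq u p ≤ 2)
    (hh : 0 < hessSq u p) (hle : (p.1 - c) * (η p ^ 2 * hessSq u p) ≤ 1) :
    parabolicOp (mcfMatrix (spatialGrad u p)) (bernsteinFun c η N u) p < 0 := by
  set A := mcfMatrix (spatialGrad u p)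
  have hA : A.PosSemidef := mcfMatrix_posSemidef _
  have hHC : ContDiffAt ℝ 2 (hessSq u) p := contDiffAt_hessSq hu.contDiffAt
  have hQC : ContDiffAt ℝ 2 (areaSq u) p := contDiffAt_areaSq hu.contDiffAt (by norm_num)
  have hQ₁ : ContDiffAt ℝ 2 (areaSq u + fun _ ↦ -1) p := hQC.add contDiffAt_const
  have hNQ : ContDiffAt ℝ 2 (N • (areaSq u + fun _ ↦ -1)) p := contDiffAt_const.mul hQ₁
  have hηH : ContDiffAt ℝ 2 (η ^ 2 * hessSq u) p := (hη.pow 2).mul hHC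
  have htηH : ContDiffAt ℝ 2 ((fun q : Spacetime n ↦ q.1 - c) * (η ^ 2 * hessSq u)) p :=
    (contDiffAt_fst.sub contDiffAt_const).mul hηH
  have hLQ : parabolicOp A (areaSq u) p ≤ -hessSq u p := by
    have hQinv : 1 / 2 ≤ (areaSq u p)⁻¹ := by
      rw [one_div]
      exact inv_anti₀ areaSq_pos hQ
    linarith [hu.parabolicOp_areaSq_le, mul_le_mul_of_nonneg_right hQinv hh.le]
  have hLηH : parabolicOp A (η ^ 2 * hessSq u) p ≤
      C * (η p ^ 2 * hessSq u p) * hessSq u p + K * hessSq u p := by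
    have h₁ := mul_le_mul_of_nonneg_left hC (sq_nonneg (η p))
    have h₂ := mul_le_mul_of_nonneg_right hK hh.le
    linarith [parabolicOp_sq_mul_hessSq_le hA hη hu.contDiffAt]
  rw [bernsteinFun, parabolicOp_add htηH hNQ, parabolicOp_time_mul hA c hηH,
    parabolicOp_const_smul _ hQ₁, parabolicOp_add hQC contDiffAt_const, parabolicOp_const, add_zero,
    Pi.mul_apply, Pi.pow_apply]
  calc η p ^ 2 * hessSq u p + (p.1 - c) * parabolicOp A (η ^ 2 * hessSq u) p +
        N * parabolicOp A (areaSq u) p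
      ≤ 1 * hessSq u p + (p.1 - c) * (C * (η p ^ 2 * hessSq u p) * hessSq u p +
          K * hessSq u p) + N * -hessSq u p := by
        have := sub_nonneg.2 hc
        gcongr
    _ = ((p.1 - c) * (η p ^ 2 * hessSq u p) * C + 1 + (p.1 - c) * K - N) * hessSq u p := by ring
    _ < 0 := by
        refine mul_neg_of_neg_of_pos ?_ hh
        linarith [mul_le_mul_of_nonneg_right hle hC₀]

/-- The cutoff `1 - |x - z|² / r²`, which localises the estimates to the ball `B(z, r)`. -/
noncomputable def ballCutoff (z : EuclideanSpace ℝ (Fin n)) (r : ℝ) : Spacetime n → ℝ :=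
  (fun _ ↦ 1) + (-(r ^ 2)⁻¹) • paraboloid 0 z 0

lemma ballCutoff_apply : ballCutoff z r p = 1 - (r ^ 2)⁻¹ * ‖p.2 - z‖ ^ 2 := by
  simp [ballCutoff, paraboloid, sub_eq_add_neg]

lemma contDiff_ballCutoff {m : ℕ∞ω} : ContDiff ℝ m (ballCutoff z r) :=
  contDiff_const.add (contDiff_paraboloid.const_smul (-(r ^ 2)⁻¹))

lemma ballCutoff_mem_Icc (hr : 0 < r) (hp : p.2 ∈ closedBall z r) :
    ballCutoff z r p ∈ Icc 0 1 := by
  rw [ballCutoff_apply, mem_Icc, sub_nonneg, sub_le_self_iff]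
  refine ⟨inv_mul_le_one_of_le₀ ?_ (by positivity), by positivity⟩
  exact pow_le_pow_left₀ (norm_nonneg _) (mem_closedBall_iff_norm.1 hp) 2

lemma cutoff_error_ballCutoff_le (P : Fin n → ℝ) (hr : 0 < r) (hp : p.2 ∈ closedBall z r) :
    2 * ballCutoff z r p * parabolicOp (mcfMatrix P) (ballCutoff z r) p +
      14 * gradForm (mcfMatrix P) (ballCutoff z r) (ballCutoff z r) p ≤ (4 * n + 56) / r ^ 2 := by
  obtain ⟨hη₀, hη₁⟩ := ballCutoff_mem_Icc hr hp
  have hB : ContDiff ℝ 2 (paraboloid 0 z 0) := contDiff_paraboloid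
  have hBs : ContDiffAt ℝ 2 ((-(r ^ 2)⁻¹) • paraboloid 0 z 0) p :=
    (hB.const_smul (-(r ^ 2)⁻¹)).contDiffAt
  have hop : parabolicOp (mcfMatrix P) (ballCutoff z r) p ≤ (r ^ 2)⁻¹ * (2 * n) := by
    rw [ballCutoff, parabolicOp_add contDiffAt_const hBs, parabolicOp_const,
      parabolicOp_const_smul _ hB.contDiffAt, parabolicOp_paraboloid]
    have := mul_le_mul_of_nonneg_left (mcfMatrix_trace_le P) (by positivity : 0 ≤ (r ^ 2)⁻¹)
    linarith
  have hgrad : gradForm (mcfMatrix P) (ballCutoff z r) (ballCutoff z r) p ≤ (r ^ 2)⁻¹ * 4 := by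
    have hx : (r ^ 2)⁻¹ * ‖p.2 - z‖ ^ 2 ≤ 1 := by
      rw [ballCutoff_apply] at hη₀
      linarith
    have hD : spatialGrad (ballCutoff z r) p =
        (-(r ^ 2)⁻¹) • spatialGrad (paraboloid 0 z 0) p := by
      rw [ballCutoff, spatialGrad_add (differentiableAt_const _)
        (hBs.differentiableAt (by simp)), spatialGrad_const, zero_add,
        spatialGrad_const_smul _ (hB.differentiable (by simp) p)]
    refine (mcfMatrix_toBilin'_self_le _ _).trans ?_
    rw [hD, smul_dotProduct, dotProduct_smul, spatialGrad_paraboloid_dotProduct_self]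
    simp only [smul_eq_mul]
    have := mul_le_mul_of_nonneg_left hx (by positivity : 0 ≤ (r ^ 2)⁻¹ * 4)
    linarith
  have hηop := mul_le_mul_of_nonneg_left hop (by positivity : 0 ≤ 2 * ballCutoff z r p)
  have hηn := mul_le_mul_of_nonneg_right hη₁ (by positivity : 0 ≤ (r ^ 2)⁻¹ * (4 * n))
  rw [div_eq_inv_mul]
  linarith

theorem exists_mul_hessSq_lt_one (n : ℕ) : ∃ N : ℝ, 1 ≤ N ∧
    ∀ (u : Spacetime n → ℝ) (z : EuclideanSpace ℝ (Fin n)) (r a b : ℝ), 0 < r → b - a ≤ r ^ 2 →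
      (∀ p ∈ Icc a b ×ˢ closedBall z r, IsMCFAt u p ∧ N * (areaSq u p - 1) < 1) →
      ∀ t ∈ Icc a b, (t - a) * hessSq u (t, z) < 1 := by
  obtain ⟨C, hC₀, hC⟩ := exists_parabolicOp_hessSq_le n
  obtain ⟨N, hN⟩ : ∃ N : ℝ, C + 4 * n + 58 ≤ N := ⟨_, le_rfl⟩
  have hN₁ : C + 58 ≤ N := by linarith [n.cast_nonneg (α := ℝ)]
  refine ⟨N, by linarith only [hC₀, hN₁], fun u z r a b hr hba hu t ht ↦ ?_⟩
  have hNQ (q : Spacetime n) : 0 ≤ N * (areaSq u q - 1) :=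
    mul_nonneg (by linarith) (sub_nonneg.2 one_le_areaSq)
  have hIcc {p : Spacetime n} (hp : p ∈ Ioc a b ×ˢ ball z r) : p ∈ Icc a b ×ˢ closedBall z r :=
    ⟨Ioc_subset_Icc_self hp.1, ball_subset_closedBall hp.2⟩
  have hFC : ∀ p ∈ Icc a b ×ˢ closedBall z r,
      ContDiffAt ℝ 2 (bernsteinFun a (ballCutoff z r) N u) p := fun p hp ↦
    contDiffAt_bernsteinFun contDiff_ballCutoff.contDiffAt (hu p hp).1.contDiffAt
  have hlt := lt_of_parabolicOp_neg (θ := 1) (A := fun p ↦ mcfMatrix (spatialGrad u p))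
    (fun p hp ↦ (hFC p hp).continuousAt.continuousWithinAt) (fun p hp ↦ hFC p (hIcc hp))
    (fun p _ ↦ mcfMatrix_posSemidef _) ?_ ?_ ?_ (t, z) ⟨ht, mem_closedBall_self hr.le⟩
  · simp only [bernsteinFun_apply, ballCutoff_apply, sub_self, norm_zero] at hlt
    linarith [hNQ (t, z)]
  · intro x hx
    simpa [bernsteinFun_apply] using (hu (a, x) ⟨left_mem_Icc.2 (ht.1.trans ht.2), hx⟩).2
  · intro s hs x hx
    simpa [bernsteinFun_apply, ballCutoff_apply, mem_sphere_iff_norm.1 hx, hr.ne'] using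
      (hu (s, x) ⟨hs, sphere_subset_closedBall hx⟩).2
  · intro p hp hθ _
    obtain ⟨hup, hQ⟩ := hu p (hIcc hp)
    obtain ⟨hη₀, hη₁⟩ := ballCutoff_mem_Icc hr (hIcc hp).2
    have hQ₂ : areaSq u p ≤ 2 := by nlinarith [one_le_areaSq (u := u) (p := p)]
    have htime : (p.1 - a) * ((4 * n + 56) / r ^ 2) ≤ 4 * n + 56 := by
      rw [← mul_div_assoc, div_le_iff₀ (by positivity), mul_comm]
      exact mul_le_mul_of_nonneg_left (by linarith [hp.1.2]) (by positivity)
    rw [bernsteinFun_apply] at hθ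
    refine hup.parabolicOp_bernsteinFun_neg (hC u p hup ?_) hC₀ contDiff_ballCutoff.contDiffAt
      (pow_le_one₀ hη₀ hη₁) (cutoff_error_ballCutoff_le _ hr (hIcc hp).2) hp.1.1.le
      (by linarith) (by linarith) hQ₂ ?_ (by linarith [hNQ p])
    · linarith [areaSq.eq_def u p]
    · refine hessSq_nonneg.lt_of_ne' fun h₀ ↦ ?_
      rw [h₀] at hθ
      linarith

end HessianEstimate

section ThinSlabFlow

variable {n : ℕ} {L δ ρ t₁ t₂ t : ℝ} {z x : EuclideanSpace ℝ (Fin n)}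
  {f : ℝ → EuclideanSpace ℝ (Fin n) → ℝ}

/-- A graphical mean curvature flow of scale `ρ` whose initial graph lies in a slab of relative
thickness `δ` and has slope at most `L`, and which exists longer than the time `δ ρ²` it takes to
become flat. In the notation of the main theorem `δ = γ⁴`. -/
structure IsThinSlabFlow (L δ ρ t₁ t₂ : ℝ) (z : EuclideanSpace ℝ (Fin n))
    (f : ℝ → EuclideanSpace ℝ (Fin n) → ℝ) : Prop where
  isGMCF : IsGMCF (Ico t₁ t₂) (ball z (4 * ρ)) f
  scale_pos : 0 < ρ
  thickness_pos : 0 < δ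
  lt_end : t₁ + δ * ρ ^ 2 < t₂
  abs_lt : ∀ t ∈ Ico t₁ t₂, ∀ x ∈ ball z (4 * ρ), |f t x| < 4 * ρ
  gradNorm_initial_le : ∀ x ∈ ball z (4 * ρ), gradNorm (f t₁) x ≤ L
  abs_initial_le : ∀ x ∈ ball z (4 * ρ), |f t₁ x| ≤ δ * ρ

/-- The interior gradient bound for flows with initial slope at most `L`. -/
noncomputable def areaSqBound (L : ℝ) : ℝ :=
  729 * (2 + L ^ 2)

/-- The constant `C` in the estimate `|Df|² ≤ C δ` for flows starting in a slab of relative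
thickness `δ`. -/
noncomputable def flatnessConst (n : ℕ) (L : ℝ) : ℝ :=
  areaSqBound L * (2 * (8 * n + 6) ^ 2 + (2 * n + 1))

lemma areaSqBound_pos : 0 < areaSqBound L := by
  unfold areaSqBound
  positivity

lemma two_mul_add_two_le_flatnessConst (n : ℕ) (L : ℝ) : 2 * n + 2 ≤ flatnessConst n L := by
  have hV : 1 ≤ areaSqBound L := by
    unfold areaSqBound
    linarith [sq_nonneg L]
  calc (2 : ℝ) * n + 2 ≤ 2 * (8 * n + 6) ^ 2 + (2 * n + 1) := by
        nlinarith [n.cast_nonneg (α := ℝ)]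
    _ ≤ flatnessConst n L := le_mul_of_one_le_left (by positivity) hV

namespace IsThinSlabFlow

variable (h : IsThinSlabFlow L δ ρ t₁ t₂ z f)
include h

lemma time_pos : 0 < δ * ρ ^ 2 :=
  mul_pos h.thickness_pos (pow_pos h.scale_pos 2)

lemma Icc_prod_closedBall_subset {a b r : ℝ} (ha : t₁ ≤ a) (hb : b ≤ t₁ + δ * ρ ^ 2)
    (hx : dist x z + r < 4 * ρ) :
    Icc a b ×ˢ closedBall x r ⊆ Ico t₁ t₂ ×ˢ ball z (4 * ρ) :=
  prod_mono (Icc_subset_Ico ha (hb.trans_lt h.lt_end)) (closedBall_subset_ball' (by linarith))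

lemma isMCFAt {a b r : ℝ} (ha : t₁ ≤ a) (hb : b ≤ t₁ + δ * ρ ^ 2) (hx : dist x z + r < 4 * ρ) :
    ∀ p ∈ Ioc a b ×ˢ ball x r, IsMCFAt (Function.uncurry f) p := fun p hp ↦
  h.isGMCF.isMCFAt isOpen_ball ⟨⟨ha.trans_lt hp.1.1, hp.1.2.trans_lt (hb.trans_lt h.lt_end)⟩,
    ball_subset_ball' (by linarith) hp.2⟩

lemma areaSq_initial_le (hx : x ∈ ball z (4 * ρ)) :
    areaSq (Function.uncurry f) (t₁, x) ≤ 1 + L ^ 2 := by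
  have hslice := h.isGMCF.hasFDerivAt_slice isOpen_ball
    (left_mem_Ico.2 (by linarith [h.time_pos, h.lt_end])) hx
  rw [areaSq_uncurry hslice.differentiableAt]
  exact add_le_add_right (Real.sqrt_le_iff.1 (h.gradNorm_initial_le x hx) |>.2) 1

theorem abs_le (ht : t ∈ Icc t₁ (t₁ + δ * ρ ^ 2)) (hx : x ∈ ball z (3 * ρ)) :
    |f t x| ≤ (8 * n + 6) * δ * ρ := by
  have hρ := h.scale_pos
  have hδρ : 0 < δ * ρ := mul_pos h.thickness_pos hρ
  have hdist : dist x z + ρ < 4 * ρ := by linarith [mem_ball.1 hx]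
  have hball : closedBall x ρ ⊆ ball z (4 * ρ) := closedBall_subset_ball' (by linarith)
  have hsub := h.Icc_prod_closedBall_subset le_rfl ht.2 hdist
  have hlt := abs_lt_add_of_isMCFAt (u := Function.uncurry f) (z := x) (κ := 4 / ρ)
    (m := 2 * (δ * ρ)) hρ.le (by positivity) (h.isGMCF.1.continuousOn.mono hsub)
    (h.isMCFAt le_rfl ht.2 hdist) (fun y hy ↦ ?_) (fun s hs y hy ↦ ?_) t (right_mem_Icc.2 ht.1)
  · calc |f t x| ≤ 2 * (δ * ρ) + 4 / ρ * ((2 * n + 1) * (t - t₁)) := hlt.le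
      _ ≤ 2 * (δ * ρ) + 4 / ρ * ((2 * n + 1) * (δ * ρ ^ 2)) := by
          gcongr
          linarith [ht.2]
      _ = (8 * n + 6) * δ * ρ := by field_simp; ring
  · exact (h.abs_initial_le y (hball hy)).trans_lt (by linarith)
  · have hs' : s ∈ Ico t₁ t₂ := ⟨hs.1, (hs.2.trans ht.2).trans_lt h.lt_end⟩
    have hκ : 4 / ρ * ρ ^ 2 = 4 * ρ := by field_simp
    exact (h.abs_lt s hs' y (hball (sphere_subset_closedBall hy))).trans_le (by linarith)

theorem areaSq_le (hδ : (2 * n + 1) * δ ≤ 1) (ht : t ∈ Icc t₁ (t₁ + δ * ρ ^ 2))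
    (hx : x ∈ ball z (5 / 2 * ρ)) : areaSq (Function.uncurry f) (t, x) ≤ areaSqBound L := by
  have hρ := h.scale_pos
  have hdist : dist z z + 3 * ρ < 4 * ρ := by
    rw [dist_self]
    linarith
  have hball : closedBall z (3 * ρ) ⊆ ball z (4 * ρ) := closedBall_subset_ball (by linarith)
  have hsub := h.Icc_prod_closedBall_subset le_rfl ht.2 hdist
  have hlt := areaSq_mul_shrinkingCutoff_cube_lt (u := Function.uncurry f) (Θ := 2 + L ^ 2)
    (by positivity) ((h.isGMCF.continuousOn_areaSq isOpen_ball).mono hsub)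
    (h.isMCFAt le_rfl ht.2 hdist)
    (fun y hy ↦ (h.areaSq_initial_le (hball hy)).trans_lt (by linarith))
    (t, x) ⟨right_mem_Icc.2 ht.1, ball_subset_closedBall (ball_subset_ball (by linarith) hx)⟩
  have hη : ρ ^ 2 ≤ shrinkingCutoff z (3 * ρ) t₁ (t, x) := by
    have hxz : ‖x - z‖ ^ 2 ≤ (5 / 2 * ρ) ^ 2 :=
      pow_le_pow_left₀ (norm_nonneg _) (mem_ball_iff_norm.1 hx).le 2
    have htime : (2 * n + 1) * (t - t₁) ≤ ρ ^ 2 := by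
      calc (2 * n + 1) * (t - t₁) ≤ (2 * n + 1) * (δ * ρ ^ 2) := by
            gcongr
            linarith [ht.2]
        _ = (2 * n + 1) * δ * ρ ^ 2 := by ring
        _ ≤ ρ ^ 2 := mul_le_of_le_one_left (sq_nonneg ρ) hδ
    rw [shrinkingCutoff_apply, paraboloid]
    linarith [sq_nonneg ρ]
  refine le_of_mul_le_mul_right ?_ (by positivity : 0 < (ρ ^ 2) ^ 3)
  calc areaSq (Function.uncurry f) (t, x) * (ρ ^ 2) ^ 3
      ≤ areaSq (Function.uncurry f) (t, x) * shrinkingCutoff z (3 * ρ) t₁ (t, x) ^ 3 := by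
        have := areaSq_pos (u := Function.uncurry f) (p := (t, x))
        gcongr
    _ ≤ (2 + L ^ 2) * ((3 * ρ) ^ 2) ^ 3 := hlt.le
    _ = areaSqBound L * (ρ ^ 2) ^ 3 := by
        rw [areaSqBound]
        ring

theorem areaSq_sub_one_lt (hδ : (2 * n + 1) * δ ≤ 1)
    (ht : t ∈ Icc (t₁ + δ * ρ ^ 2 / 2) (t₁ + δ * ρ ^ 2)) (hx : x ∈ ball z (3 / 2 * ρ)) :
    areaSq (Function.uncurry f) (t, x) - 1 < flatnessConst n L * δ := by
  have hρ := h.scale_pos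
  have hδ₀ := h.thickness_pos
  have htime := h.time_pos
  have hV := areaSqBound_pos (L := L)
  have htt : t₁ < t := by linarith [ht.1]
  have hdist : dist x z + ρ < 4 * ρ := by linarith [mem_ball.1 hx]
  have hsub := h.Icc_prod_closedBall_subset le_rfl ht.2 hdist
  have hlt := mul_areaSq_sub_one_lt (u := Function.uncurry f) (M := (8 * n + 6) * δ * ρ)
    (V := areaSqBound L) hρ htt (by positivity) (h.isGMCF.1.continuousOn.mono hsub)
    ((h.isGMCF.continuousOn_areaSq isOpen_ball).mono hsub) (h.isMCFAt le_rfl ht.2 hdist)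
    (fun p hp ↦ ?_) t (right_mem_Icc.2 htt.le)
  · refine lt_of_mul_lt_mul_left (hlt.trans_le ?_) (sub_pos.2 htt).le
    calc areaSqBound L * ((8 * n + 6) * δ * ρ) ^ 2 +
          areaSqBound L * (t - t₁) / ρ ^ 2 * ((2 * n + 1) * (t - t₁))
        = areaSqBound L * (8 * n + 6) ^ 2 * δ * (δ * ρ ^ 2) +
          areaSqBound L * (2 * n + 1) * (t - t₁) * ((t - t₁) / ρ ^ 2) := by ring
      _ ≤ areaSqBound L * (8 * n + 6) ^ 2 * δ * (2 * (t - t₁)) +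
          areaSqBound L * (2 * n + 1) * (t - t₁) * δ := by
        have hle : (t - t₁) / ρ ^ 2 ≤ δ := (div_le_iff₀ (by positivity)).2 (by linarith [ht.2])
        have hle₂ : δ * ρ ^ 2 ≤ 2 * (t - t₁) := by linarith [ht.1]
        have := sub_nonneg.2 htt.le
        gcongr
      _ = (t - t₁) * (flatnessConst n L * δ) := by
        rw [flatnessConst]
        ring
  · have hpt : p.1 ∈ Icc t₁ (t₁ + δ * ρ ^ 2) := Icc_subset_Icc_right ht.2 hp.1
    have hpx : p.2 ∈ ball z (5 / 2 * ρ) :=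
      closedBall_subset_ball' (by linarith [mem_ball.1 hx]) hp.2
    exact ⟨h.abs_le hpt (ball_subset_ball (by linarith) hpx), h.areaSq_le hδ hpt hpx⟩

lemma isMCFAt_end (hx : x ∈ ball z (4 * ρ)) :
    IsMCFAt (Function.uncurry f) (t₁ + δ * ρ ^ 2, x) :=
  h.isGMCF.isMCFAt isOpen_ball ⟨⟨lt_add_of_pos_right _ h.time_pos, h.lt_end⟩, hx⟩

lemma thickness_le (hδ : flatnessConst n L * δ ≤ 1) : (2 * n + 2) * δ ≤ 1 :=
  (mul_le_mul_of_nonneg_right (two_mul_add_two_le_flatnessConst n L) h.thickness_pos.le).trans hδ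

theorem gradNorm_le (hδ : flatnessConst n L * δ ≤ 1) (hx : x ∈ ball z ρ) :
    gradNorm (f (t₁ + δ * ρ ^ 2)) x ≤ √(flatnessConst n L * δ) := by
  have hρ := h.scale_pos
  have htime := h.time_pos
  have hlt := h.areaSq_sub_one_lt (by linarith [h.thickness_le hδ, h.thickness_pos])
    ⟨by linarith, le_rfl⟩ (ball_subset_ball (by linarith) hx)
  have hslice := h.isGMCF.hasFDerivAt_slice isOpen_ball
    ⟨le_add_of_nonneg_right htime.le, h.lt_end⟩ (ball_subset_ball (by linarith) hx)
  rw [areaSq_uncurry hslice.differentiableAt, add_sub_cancel_left] at hlt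
  exact Real.sqrt_le_sqrt hlt.le

end IsThinSlabFlow

theorem exists_hessNorm_le_of_isThinSlabFlow (n : ℕ) : ∃ N : ℝ, 1 ≤ N ∧
    ∀ (L δ ρ t₁ t₂ : ℝ) (z : EuclideanSpace ℝ (Fin n)) (f : ℝ → EuclideanSpace ℝ (Fin n) → ℝ),
      IsThinSlabFlow L δ ρ t₁ t₂ z f → N * (flatnessConst n L * δ) ≤ 1 →
      ∀ x ∈ ball z ρ, hessNorm (f (t₁ + δ * ρ ^ 2)) x ≤ √(2 / (δ * ρ ^ 2)) := by
  obtain ⟨N, hN, hhess⟩ := exists_mul_hessSq_lt_one n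
  refine ⟨N, hN, fun L δ ρ t₁ t₂ z f h hNδ x hx ↦ ?_⟩
  have hρ := h.scale_pos
  have hδ₀ := h.thickness_pos
  have htime := h.time_pos
  have hx' : dist x z < ρ := hx
  have hC : 0 ≤ flatnessConst n L :=
    le_trans (by positivity) (two_mul_add_two_le_flatnessConst n L)
  have hδ : (2 * n + 2) * δ ≤ 1 :=
    h.thickness_le ((le_mul_of_one_le_left (by positivity) hN).trans hNδ)
  have hδ₂ : δ ≤ 1 / 2 := by
    have : (0 : ℝ) ≤ n * δ := by positivity
    linarith
  have hlen : t₁ + δ * ρ ^ 2 - (t₁ + δ * ρ ^ 2 / 2) ≤ (ρ / 2) ^ 2 := by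
    linarith [mul_le_mul_of_nonneg_right hδ₂ (sq_nonneg ρ)]
  have hlt := hhess (Function.uncurry f) x (ρ / 2) (t₁ + δ * ρ ^ 2 / 2) (t₁ + δ * ρ ^ 2)
    (half_pos hρ) hlen (fun p hp ↦ ⟨?_, ?_⟩) (t₁ + δ * ρ ^ 2) ⟨by linarith, le_rfl⟩
  · have hmcf := h.isMCFAt_end (ball_subset_ball (by linarith) hx)
    rw [hessNorm_eq_sqrt_hessSq (hmcf.contDiffAt.of_le (by norm_num))]
    refine Real.sqrt_le_sqrt ((le_div_iff₀ htime).2 ?_)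
    linarith
  · exact h.isGMCF.isMCFAt isOpen_ball ⟨⟨by linarith [hp.1.1], hp.1.2.trans_lt h.lt_end⟩,
      closedBall_subset_ball' (by linarith) hp.2⟩
  · have := h.areaSq_sub_one_lt (by linarith) hp.1 (closedBall_subset_ball' (by linarith) hp.2)
    exact (mul_lt_mul_of_pos_left this (by linarith)).trans_le hNδ

end ThinSlabFlow

lemma sqrt_mul_pow_four (c γ : ℝ) : √(c * γ ^ 4) = √c * γ ^ 2 := by
  rw [show γ ^ 4 = (γ ^ 2) ^ 2 by ring, Real.sqrt_mul' c (by positivity),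
    Real.sqrt_sq (by positivity)]

lemma sqrt_div_pow_four_mul_sq (c : ℝ) {γ ρ : ℝ} (hρ : 0 ≤ ρ) :
    √(c / (γ ^ 4 * ρ ^ 2)) = √c * (γ ^ 2)⁻¹ * ρ⁻¹ := by
  rw [show γ ^ 4 * ρ ^ 2 = (γ ^ 2 * ρ) ^ 2 by ring, Real.sqrt_div' c (by positivity),
    Real.sqrt_sq (by positivity), div_eq_mul_inv, mul_inv, mul_assoc]

/-- **Becoming flat** (graphical case of Lemma `flatgraphlem`).
For every `L₀ ≥ 1` there are `Λ₁ > 1` and `γ₁ ∈ (0,1)` such that: if `f` is a graphical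
mean curvature flow on `[t₁,t₂) × Bⁿ(ẑ₀,4ρ₀)` with `|f| < 4ρ₀`,
`sup |Df(t₁,·)| ≤ L₀` and `sup |f(t₁,·)| ≤ γ⁴ρ₀` for some `γ ∈ (0,γ₁]`, then at the time
`s₁ = t₁ + γ⁴ρ₀²` (assumed `< t₂`) one has, for all `x ∈ Bⁿ(ẑ₀,ρ₀)`:
`|f(s₁,x)| ≤ Λ₁γ⁴ρ₀`, `|Df(s₁,x)| ≤ Λ₁γ` and `|D²f(s₁,x)| ≤ Λ₁γ⁻²ρ₀⁻¹`. -/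
theorem flatgraphlem (n : ℕ) (hn : 1 ≤ n) (L₀ : ℝ) (hL : 1 ≤ L₀) :
    ∃ Λ₁ γ₁ : ℝ, 1 < Λ₁ ∧ γ₁ ∈ Set.Ioo (0 : ℝ) 1 ∧
      ∀ γ ∈ Set.Ioc (0 : ℝ) γ₁, ∀ ρ₀ : ℝ, 0 < ρ₀ → ∀ t₁ t₂ : ℝ,
        t₁ + γ ^ 4 * ρ₀ ^ 2 < t₂ →
        ∀ (z₀ : EuclideanSpace ℝ (Fin n)) (f : ℝ → EuclideanSpace ℝ (Fin n) → ℝ),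
          IsGMCF (Set.Ico t₁ t₂) (Metric.ball z₀ (4 * ρ₀)) f →
          (∀ t ∈ Set.Ico t₁ t₂, ∀ x ∈ Metric.ball z₀ (4 * ρ₀), |f t x| < 4 * ρ₀) →
          (∀ x ∈ Metric.ball z₀ (4 * ρ₀), gradNorm (f t₁) x ≤ L₀) →
          (∀ x ∈ Metric.ball z₀ (4 * ρ₀), |f t₁ x| ≤ γ ^ 4 * ρ₀) →
          ∀ x ∈ Metric.ball z₀ ρ₀,
            |f (t₁ + γ ^ 4 * ρ₀ ^ 2) x| ≤ Λ₁ * γ ^ 4 * ρ₀ ∧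
            gradNorm (f (t₁ + γ ^ 4 * ρ₀ ^ 2)) x ≤ Λ₁ * γ ∧
            hessNorm (f (t₁ + γ ^ 4 * ρ₀ ^ 2)) x ≤ Λ₁ * (γ ^ 2)⁻¹ * ρ₀⁻¹ := by
  obtain ⟨N, hN, hhess⟩ := exists_hessNorm_le_of_isThinSlabFlow n
  have hC : 1 < flatnessConst n L₀ := by
    linarith [two_mul_add_two_le_flatnessConst n L₀, n.cast_nonneg (α := ℝ)]
  set C := flatnessConst n L₀
  have hNC : 1 < N * C := one_lt_mul_of_le_of_lt hN hC
  obtain ⟨Λ, hΛ₀, hΛ₁, hΛ₂⟩ : ∃ Λ : ℝ, 8 * n + 6 ≤ Λ ∧ √C ≤ Λ ∧ √2 ≤ Λ :=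
    ⟨max (8 * n + 6) (max (√C) √2), by simp⟩
  have hΛ : 1 < Λ := by linarith [n.cast_nonneg (α := ℝ)]
  refine ⟨Λ, (N * C)⁻¹, hΛ, ⟨by positivity, inv_lt_one_of_one_lt₀ hNC⟩, ?_⟩
  intro γ ⟨hγ₀, hγ⟩ ρ hρ t₁ t₂ ht z f hf hbound hgrad hthin x hx
  have h : IsThinSlabFlow L₀ (γ ^ 4) ρ t₁ t₂ z f :=
    ⟨hf, hρ, by positivity, ht, hbound, hgrad, hthin⟩
  have hγ₁ : γ ≤ 1 := hγ.trans (inv_le_one_of_one_le₀ hNC.le)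
  have hNγ : N * (C * γ ^ 4) ≤ 1 := by
    rw [← mul_assoc, ← le_inv_mul_iff₀ (by positivity), mul_one]
    exact (pow_le_of_le_one hγ₀.le hγ₁ (by norm_num)).trans hγ
  have hCγ : C * γ ^ 4 ≤ 1 := (le_mul_of_one_le_left (by positivity) hN).trans hNγ
  refine ⟨?_, ?_, ?_⟩
  · have hx₃ : x ∈ ball z (3 * ρ) := ball_subset_ball (by linarith) hx
    exact (h.abs_le ⟨by linarith [h.time_pos], le_rfl⟩ hx₃).trans (by gcongr)
  · refine (h.gradNorm_le hCγ hx).trans ?_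
    rw [sqrt_mul_pow_four]
    exact mul_le_mul hΛ₁ (pow_le_of_le_one hγ₀.le hγ₁ two_ne_zero) (by positivity) (by linarith)
  · refine (hhess L₀ _ ρ t₁ t₂ z f h hNγ x hx).trans ?_
    rw [sqrt_div_pow_four_mul_sq 2 hρ.le]
    gcongr
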